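/- arXiv:2006.08588 — 8 statements merged into one kernel-verified Lean document; each statement's English description precedes it below -/
import Mathlib

section
/- Let F be a field and let A and B be n×n matrices over F with A*B = B*A. Then the F-vector space dimension of the unital subalgebra of the n×n matrix algebra generated by A and B is at most n. -/
/-
`B` is an endomorphism of the module `M = Fⁿ` over the principal ideal domain `R = F[X]`, with `X`
acting as `A`, and `F[A, B]` is the image of `R[B] ⊆ End_R M`. We claim `dim R[B] ≤ dim M` for every
finitely generated module `M` over a principal ideal domain and every endomorphism `B`.

Choose `v ∈ M` whose annihilator `(d)` is that of all of `M`, so that `dim R/d = dim Rv` and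
`d M = 0`. Iterating on `M/Rv` gives scalars `g₀ = d, g₁, g₂, …` such that `gⱼ M` is generated by
`j` elements and `∑ dim R/gⱼ ≤ dim M`. By Cayley-Hamilton on `gⱼ M`, some monic polynomial of degree
`j` in `B` is killed by `gⱼ`, that is, `gⱼ Bʲ ∈ R + R B + ⋯ + R Bʲ⁻¹`. Hence the `j`-th successive
quotient of the filtration of `R[B]` by powers of `B` is a quotient of `R/gⱼ`.
-/

open Module Polynomial
open scoped Pointwise

section SpanFinrankSemiring

variable {R M N : Type*} [Semiring R] [AddCommMonoid M] [Module R M] [AddCommMonoid N]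
  [Module R N]

theorem spanFinrank_sup_le {P Q : Submodule R M} (hP : P.FG) (hQ : Q.FG) :
    (P ⊔ Q).spanFinrank ≤ P.spanFinrank + Q.spanFinrank := by
  rw [← (hP.sup hQ).spanRank_le_iff, Nat.cast_add, ← hP.spanRank_eq_spanFinrank,
    ← hQ.spanRank_eq_spanFinrank]
  exact Submodule.spanRank_sup_le_sum_spanRank

theorem exists_le_map_eq_spanFinrank_le (f : M →ₗ[R] N) {P : Submodule R M} (hP : (P.map f).FG) :
    ∃ Q ≤ P, Q.FG ∧ Q.map f = P.map f ∧ Q.spanFinrank ≤ (P.map f).spanFinrank := by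
  classical
  obtain ⟨t, ht_card, ht_span⟩ := hP.exists_span_finset_card_eq_spanFinrank
  have ht : ∀ y : t, ∃ x ∈ P, f x = y := fun y ↦
    Submodule.mem_map.mp (ht_span ▸ Submodule.subset_span y.2)
  choose lift hlift_mem hlift using ht
  refine ⟨Submodule.span R (Set.range lift),
    Submodule.span_le.mpr (Set.range_subset_iff.mpr hlift_mem),
    Submodule.fg_span (Set.finite_range lift), ?_, ?_⟩
  · rw [Submodule.map_span, ← Set.range_comp, ← ht_span]
    congr 1
    ext y
    simp [hlift]
  · calc (Submodule.span R (Set.range lift)).spanFinrank ≤ (Set.range lift).ncard :=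
          Submodule.spanFinrank_span_le_ncard_of_finite (Set.finite_range lift)
      _ ≤ Nat.card t := by
        rw [← Set.image_univ, ← Set.ncard_univ]
        exact Set.ncard_image_le
      _ = (P.map f).spanFinrank := by simpa using ht_card

theorem spanFinrank_le_one_of_isPrincipal {P : Submodule R M} (hP : P.IsPrincipal) :
    P.spanFinrank ≤ 1 := by
  obtain ⟨x, rfl⟩ := hP
  simpa using Submodule.spanFinrank_span_le_ncard_of_finite (R := R) (Set.finite_singleton x)

end SpanFinrankSemiring

section SpanFinrankRing

variable {R M N : Type*} [Ring R] [AddCommGroup M] [Module R M] [AddCommGroup N] [Module R N]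

theorem spanFinrank_le_spanFinrank_map_add_spanFinrank_inf_ker (f : M →ₗ[R] N)
    {P : Submodule R M} (hmap : (P.map f).FG) (hker : (P ⊓ LinearMap.ker f).FG) :
    P.spanFinrank ≤ (P.map f).spanFinrank + (P ⊓ LinearMap.ker f).spanFinrank := by
  obtain ⟨Q, hQP, hQ, hQ_map, hQ_rank⟩ := exists_le_map_eq_spanFinrank_le f hmap
  have hP : Q ⊔ P ⊓ LinearMap.ker f = P := by
    rw [inf_comm, ← sup_inf_assoc_of_le _ hQP, ← Submodule.comap_map_eq, hQ_map, inf_eq_right]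
    exact Submodule.le_comap_map f P
  calc P.spanFinrank = (Q ⊔ P ⊓ LinearMap.ker f).spanFinrank := by rw [hP]
    _ ≤ Q.spanFinrank + (P ⊓ LinearMap.ker f).spanFinrank := spanFinrank_sup_le hQ hker
    _ ≤ _ := by gcongr

theorem isPrincipal_inf_span_singleton [IsPrincipalIdealRing R] (P : Submodule R M) (v : M) :
    (P ⊓ R ∙ v).IsPrincipal := by
  rw [inf_comm, ← LinearMap.range_toSpanSingleton, ← Submodule.map_comap_eq]
  exact (IsPrincipalIdealRing.principal _).map _

theorem spanFinrank_le_spanFinrank_map_mkQ_add_one [IsPrincipalIdealRing R]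
    {P : Submodule R M} (hP : P.FG) (v : M) :
    P.spanFinrank ≤ (P.map (R ∙ v).mkQ).spanFinrank + 1 := by
  have hker : (P ⊓ LinearMap.ker (R ∙ v).mkQ).IsPrincipal := by
    rw [Submodule.ker_mkQ]
    exact isPrincipal_inf_span_singleton P v
  grw [spanFinrank_le_spanFinrank_map_add_spanFinrank_inf_ker (R ∙ v).mkQ (hP.map _) hker.fg,
    spanFinrank_le_one_of_isPrincipal hker]

end SpanFinrankRing

section CayleyHamilton

theorem coe_aeval_restrict_apply {R M : Type*} [CommSemiring R] [AddCommMonoid M] [Module R M]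
    (f : End R M) {N : Submodule R M} (hN : ∀ x ∈ N, f x ∈ N)
    (p : R[X]) (x : N) : (aeval (f.restrict hN) p x : M) = aeval f p x := by
  simp only [aeval_eq_sum_range, LinearMap.sum_apply, LinearMap.smul_apply,
    AddSubmonoidClass.coe_finsetSum, Submodule.coe_smul]
  refine Finset.sum_congr rfl fun i _ ↦ ?_
  rw [End.pow_restrict, LinearMap.coe_restrict_apply]

variable {R M A : Type*} [CommRing R] [AddCommGroup M] [Module R M] [Ring A] [Algebra R A]

theorem exists_monic_natDegree_eq_spanFinrank_smul_aeval_eq_zero [Module.Finite R M]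
    (f : End R M) (r : R) :
    ∃ p : R[X], p.Monic ∧ p.natDegree = (r • (⊤ : Submodule R M)).spanFinrank ∧
      r • aeval f p = 0 := by
  have hf : ∀ x ∈ r • (⊤ : Submodule R M), f x ∈ r • (⊤ : Submodule R M) := by
    rintro _ ⟨x, -, rfl⟩
    exact ⟨f x, trivial, by simp⟩
  have : Module.Finite R ↥(r • (⊤ : Submodule R M)) :=
    Module.Finite.iff_fg.mpr (Module.Finite.fg_top.map _)
  obtain ⟨p, hp, hdeg, hzero⟩ :=
    LinearMap.exists_monic_and_natDegree_eq_and_aeval_eq_zero R (f.restrict hf)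
  refine ⟨p, hp, hdeg.trans (Submodule.spanFinrank_top _), LinearMap.ext fun x ↦ ?_⟩
  have hx : r • x ∈ r • (⊤ : Submodule R M) := Submodule.smul_mem_pointwise_smul x r ⊤ trivial
  calc (r • aeval f p) x = aeval f p (r • x) := by simp
    _ = aeval (f.restrict hf) p ⟨r • x, hx⟩ :=
      (coe_aeval_restrict_apply f hf p ⟨r • x, hx⟩).symm
    _ = 0 := by simp [hzero]

theorem smul_pow_mem_span_pow_of_smul_aeval_eq_zero {r : R} {a : A} {p : R[X]} (hp : p.Monic)
    (h : r • aeval a p = 0) :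
    r • a ^ p.natDegree ∈ Submodule.span R ((a ^ ·) '' Set.Iio p.natDegree) := by
  rw [hp.as_sum, map_add, map_pow, aeval_X, smul_add, add_eq_zero_iff_eq_neg] at h
  rw [h]
  refine neg_mem (Submodule.smul_mem _ _ ?_)
  rw [map_sum]
  refine sum_mem fun i hi ↦ ?_
  rw [map_mul, aeval_C, map_pow, aeval_X, ← Algebra.smul_def]
  exact Submodule.smul_mem _ _ (Submodule.subset_span ⟨i, Finset.mem_range.mp hi, rfl⟩)

theorem smul_pow_mem_span_pow_of_spanFinrank_smul_top_le [Module.Finite R M] (f : End R M)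
    {r : R} {j : ℕ} (h : (r • (⊤ : Submodule R M)).spanFinrank ≤ j) :
    r • f ^ j ∈ Submodule.span R ((f ^ ·) '' Set.Iio j) := by
  cases subsingleton_or_nontrivial R
  · have := Module.subsingleton R (End R M)
    rw [Subsingleton.elim (r • f ^ j) 0]
    exact zero_mem _
  obtain ⟨p, hp, hdeg, hzero⟩ := exists_monic_natDegree_eq_spanFinrank_smul_aeval_eq_zero f r
  rw [← hdeg] at h
  have hdeg' : (X ^ (j - p.natDegree) * p).natDegree = j := by
    rw [(monic_X_pow _).natDegree_mul hp, natDegree_X_pow, Nat.sub_add_cancel h]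
  have hzero' : r • aeval f (X ^ (j - p.natDegree) * p) = 0 := by
    rw [map_mul, ← mul_smul_comm, hzero, mul_zero]
  simpa only [hdeg'] using
    smul_pow_mem_span_pow_of_smul_aeval_eq_zero ((monic_X_pow _).mul hp) hzero'

theorem exists_span_pow_image_Iio_eq_adjoin_singleton [Module.Finite R M] (f : End R M) :
    ∃ k : ℕ, Submodule.span R ((f ^ ·) '' Set.Iio k) =
      Subalgebra.toSubmodule (Algebra.adjoin R {f}) := by
  classical
  obtain ⟨p, hp, hzero⟩ := LinearMap.exists_monic_and_aeval_eq_zero R f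
  exact ⟨p.natDegree, by simpa using Submodule.span_range_natDegree_eq_adjoin hp hzero⟩

end CayleyHamilton

section Length

variable (F : Type*) {R M : Type*} [CommRing F] [CommRing R] [Algebra F R]
  [AddCommGroup M] [Module R M] [Module F M] [IsScalarTower F R M]

theorem length_eq_length_add_length_quotient (N : Submodule R M) :
    length F M = length F N + length F (M ⧸ N) :=
  length_eq_add_of_exact (N.subtype.restrictScalars F) (N.mkQ.restrictScalars F)
    N.subtype_injective N.mkQ_surjective (LinearMap.exact_subtype_mkQ N)

theorem length_eq_length_add_length_map_mkQ {N P : Submodule R M} (h : N ≤ P) :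
    length F P = length F N + length F (P.map N.mkQ) :=
  length_eq_add_of_exact ((Submodule.inclusion h).restrictScalars F)
    ((N.mkQ.submoduleMap P).restrictScalars F) (Submodule.inclusion_injective h)
    (N.mkQ.submoduleMap_surjective P) fun x ↦ by
      simp [Subtype.ext_iff]

theorem length_span_singleton_le {r : R} {x : M} (h : r • x = 0) :
    length F (R ∙ x) ≤ length F (R ⧸ R ∙ r) := by
  have hle : R ∙ r ≤ Ideal.torsionOf R M x := by
    rwa [Submodule.span_singleton_le_iff_mem, Ideal.mem_torsionOf_iff]
  rw [← ((Ideal.quotTorsionOfEquivSpanSingleton R M x).restrictScalars F).length_eq]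
  exact length_le_of_surjective ((Submodule.factor hle).restrictScalars F)
    (Submodule.factor_surjective hle)

theorem length_span_insert_le {s : Set M} {r : R} {x : M}
    (h : r • x ∈ Submodule.span R s) :
    length F (Submodule.span R (insert x s)) ≤
      length F (Submodule.span R s) + length F (R ⧸ R ∙ r) := by
  have hmap : (Submodule.span R (insert x s)).map (Submodule.span R s).mkQ =
      R ∙ (Submodule.span R s).mkQ x := by
    rw [Submodule.span_insert, Submodule.map_sup, Submodule.mkQ_map_self, sup_bot_eq,
      Submodule.map_span, Set.image_singleton]
  have hx : r • (Submodule.span R s).mkQ x = 0 := by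
    rwa [← map_smul, Submodule.mkQ_apply, Submodule.Quotient.mk_eq_zero]
  rw [length_eq_length_add_length_map_mkQ F (Submodule.span_mono (Set.subset_insert x s)), hmap]
  grw [length_span_singleton_le F hx]

theorem length_span_image_Iio_le (x : ℕ → M) {k : ℕ} (g : Fin k → R)
    (h : ∀ j : Fin k, g j • x j ∈ Submodule.span R (x '' Set.Iio (j : ℕ))) :
    length F (Submodule.span R (x '' Set.Iio k)) ≤ ∑ j, length F (R ⧸ R ∙ g j) := by
  induction k with
  | zero =>
    have hbot : length F (⊥ : Submodule R M) = 0 := length_eq_zero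
    have hx : x '' Set.Iio 0 = ∅ := by simp
    rw [hx, Submodule.span_empty, hbot]
    exact zero_le
  | succ k ih =>
    have hlast : length F (Submodule.span R (x '' Set.Iio (k + 1))) ≤
        length F (Submodule.span R (x '' Set.Iio k)) + length F (R ⧸ R ∙ g (Fin.last k)) := by
      rw [← Order.succ_eq_add_one, Order.Iio_succ_eq_insert, Set.image_insert_eq]
      exact length_span_insert_le F (h (Fin.last k))
    rw [Fin.sum_univ_castSucc]
    grw [hlast, ih _ fun j ↦ h j.castSucc]

end Length

section PrincipalIdealRing

variable (F : Type*) {R M : Type*} [CommRing F] [CommRing R] [IsDomain R]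
  [IsPrincipalIdealRing R] [Algebra F R]
  [AddCommGroup M] [Module R M] [Module.Finite R M] [Module F M] [IsScalarTower F R M]

variable (R M) in
theorem exists_smul_top_eq_bot_and_length_quotient_eq_length_span_singleton :
    ∃ (d : R) (v : M), d • (⊤ : Submodule R M) = ⊥ ∧ length F (R ⧸ R ∙ d) = length F (R ∙ v) := by
  obtain ⟨v, hv⟩ := exists_ker_toSpanSingleton_eq_annihilator (R := R) (M := M)
  obtain ⟨d, hd⟩ := IsPrincipalIdealRing.principal (annihilator R M)
  have hdv : R ∙ d = Ideal.torsionOf R M v := (hv.trans hd).symm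
  refine ⟨d, v, ?_, ?_⟩
  · rw [eq_bot_iff]
    rintro _ ⟨x, -, rfl⟩
    exact mem_annihilator.mp (hd ▸ Submodule.mem_span_singleton_self d) x
  · rw [hdv]
    exact ((Ideal.quotTorsionOfEquivSpanSingleton R M v).restrictScalars F).length_eq

theorem exists_spanFinrank_smul_top_le_and_sum_length_le (k : ℕ) :
    ∃ g : Fin k → R, (∀ j, (g j • (⊤ : Submodule R M)).spanFinrank ≤ j) ∧
      ∑ j, length F (R ⧸ R ∙ g j) ≤ length F M := by
  induction k generalizing M with
  | zero => exact ⟨Fin.elim0, fun j ↦ j.elim0, by simp⟩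
  | succ k ih =>
    obtain ⟨d, v, hd, hdv⟩ :=
      exists_smul_top_eq_bot_and_length_quotient_eq_length_span_singleton F R M
    obtain ⟨g, hg_rank, hg_length⟩ := ih (M := M ⧸ R ∙ v)
    have hrank_succ (j : Fin k) : (g j • (⊤ : Submodule R M)).spanFinrank ≤ j + 1 := by
      have hmap : (g j • (⊤ : Submodule R M)).map (R ∙ v).mkQ = g j • ⊤ := by
        rw [Submodule.map_pointwise_smul, Submodule.map_top, Submodule.range_mkQ]
      have hfg : (g j • (⊤ : Submodule R M)).FG := Module.Finite.fg_top.map _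
      grw [spanFinrank_le_spanFinrank_map_mkQ_add_one hfg v, hmap, hg_rank j]
    refine ⟨Fin.cons d g,
      Fin.forall_fin_succ.mpr ⟨by simp [hd], by simpa using hrank_succ⟩, ?_⟩
    calc ∑ j, length F (R ⧸ R ∙ (Fin.cons d g : Fin (k + 1) → R) j)
        = length F (R ⧸ R ∙ d) + ∑ j, length F (R ⧸ R ∙ g j) := Fin.sum_univ_succ _
      _ ≤ length F (R ∙ v) + length F (M ⧸ R ∙ v) := by grw [hdv, hg_length]
      _ = length F M := (length_eq_length_add_length_quotient F (R ∙ v)).symm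

theorem length_adjoin_singleton_le (f : End R M) :
    length F (Algebra.adjoin R {f}) ≤ length F M := by
  obtain ⟨k, hk⟩ := exists_span_pow_image_Iio_eq_adjoin_singleton f
  obtain ⟨g, hg_rank, hg_length⟩ :=
    exists_spanFinrank_smul_top_le_and_sum_length_le F (R := R) (M := M) k
  calc length F (Algebra.adjoin R {f})
      = length F (Submodule.span R ((f ^ ·) '' Set.Iio k)) := by rw [hk]; rfl
    _ ≤ ∑ j, length F (R ⧸ R ∙ g j) := length_span_image_Iio_le F _ g fun j ↦
        smul_pow_mem_span_pow_of_spanFinrank_smul_top_le f (hg_rank j)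
    _ ≤ length F M := hg_length

end PrincipalIdealRing

section Gerstenhaber

variable {F E V : Type*} [CommRing F] [Ring E] [Algebra F E] [AddCommGroup V] [Module F V]
  [Module E V] [IsScalarTower F E V]

/-- The action on `V` of an element `b` commuting with `a`, as an `F[X]`-linear endomorphism of
`AEval F V a`, i.e. of `V` with `X` acting as `a`. -/
noncomputable def endOfCommute {a b : E} (hab : Commute a b) : End F[X] (AEval F V a) :=
  LinearMap.ofAEval a ((AEval.of F V a) ∘ₗ Algebra.lsmul F F V b) fun v ↦ by
    simp [← AEval.of_aeval_smul, smul_smul, hab.eq]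

theorem endOfCommute_of {a b : E} (hab : Commute a b) (v : V) :
    endOfCommute (F := F) hab (AEval.of F V a v) = AEval.of F V a (b • v) := rfl

variable (F V) in
/-- The inclusion of the `F[X]`-linear endomorphisms of `V`, with `X` acting as `a`, into its
`F`-linear endomorphisms. -/
noncomputable def endAEvalToEnd (a : E) : End F[X] (AEval F V a) →ₐ[F] End F V :=
  ((AEval.of F V a).symm.conjAlgEquiv F).toAlgHom.comp (Algebra.lsmul F F (AEval F V a))

theorem endAEvalToEnd_endOfCommute {a b : E} (hab : Commute a b) :
    endAEvalToEnd F V a (endOfCommute hab) = Algebra.lsmul F F V b := by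
  ext v
  simp [endAEvalToEnd, endOfCommute_of]

theorem endAEvalToEnd_algebraMap_X (a : E) :
    endAEvalToEnd F V a (algebraMap F[X] _ X) = Algebra.lsmul F F V a := by
  ext v
  simp [endAEvalToEnd, AEval.X_smul_of]

theorem map_lsmul_adjoin_pair_le {a b : E} (hab : Commute a b) :
    (Algebra.adjoin F {a, b}).map (Algebra.lsmul F F V) ≤
      ((Algebra.adjoin F[X] {endOfCommute hab}).restrictScalars F).map (endAEvalToEnd F V a) := by
  rw [AlgHom.map_adjoin, Algebra.adjoin_le_iff, Set.image_pair, Set.pair_subset_iff]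
  exact ⟨⟨_, (Algebra.adjoin F[X] _).algebraMap_mem X, endAEvalToEnd_algebraMap_X a⟩,
    ⟨_, Algebra.self_mem_adjoin_singleton F[X] _, endAEvalToEnd_endOfCommute hab⟩⟩

theorem length_map_lsmul_adjoin_pair_le {a b : E} (hab : Commute a b) :
    length F ((Algebra.adjoin F {a, b}).map (Algebra.lsmul F F V)) ≤
      length F (Algebra.adjoin F[X] {endOfCommute (F := F) (V := V) hab}) := by
  let S := (Algebra.adjoin F[X] {endOfCommute (F := F) (V := V) hab}).restrictScalars F
  have hle : (Algebra.adjoin F {a, b}).map (Algebra.lsmul F F V) ≤ S.map (endAEvalToEnd F V a) :=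
    map_lsmul_adjoin_pair_le hab
  calc length F ((Algebra.adjoin F {a, b}).map (Algebra.lsmul F F V))
      ≤ length F (S.map (endAEvalToEnd F V a)) :=
        length_le_of_injective (Subalgebra.inclusion hle).toLinearMap
          (Subalgebra.inclusion_injective hle)
    _ ≤ length F S :=
        length_le_of_surjective ((endAEvalToEnd F V a).subalgebraMap S).toLinearMap
          ((endAEvalToEnd F V a).subalgebraMap_surjective S)

end Gerstenhaber

theorem gerstenhaber_general {F E V : Type*} [Field F] [Ring E] [Algebra F E] [AddCommGroup V]
    [Module F V] [Module.Finite F V] [Module E V] [IsScalarTower F E V] [FaithfulSMul E V]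
    {a b : E} (hab : Commute a b) : finrank F (Algebra.adjoin F {a, b}) ≤ finrank F V := by
  have hinj : Function.Injective (Algebra.lsmul F F V : E →ₐ[F] End F V) := fun x y h ↦
    eq_of_smul_eq_smul (α := V) fun v ↦ LinearMap.congr_fun h v
  have : Module.Finite F (AEval F V a) := .equiv (AEval.of F V a)
  have : Module.Finite F[X] (AEval F V a) := .of_restrictScalars_finite F _ _
  rw [((Algebra.adjoin F {a, b}).equivMapOfInjective _ hinj).toLinearEquiv.finrank_eq,
    ← Nat.cast_le (α := ℕ∞), ← length_eq_finrank, ← length_eq_finrank]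
  calc length F ((Algebra.adjoin F {a, b}).map (Algebra.lsmul F F V))
      ≤ length F (Algebra.adjoin F[X] {endOfCommute hab}) := length_map_lsmul_adjoin_pair_le hab
    _ ≤ length F (AEval F V a) := length_adjoin_singleton_le F _
    _ = length F V := (AEval.of F V a).symm.length_eq

/-- Gerstenhaber's theorem: for commuting `n × n` matrices `A, B` over a field `F`,
the unital subalgebra `F[A,B]` they generate has dimension at most `n`. -/
theorem gerstenhaber (F : Type*) [Field F] (n : ℕ)
    (A B : Matrix (Fin n) (Fin n) F) (hcomm : A * B = B * A) :
    Module.finrank F ↥(Algebra.adjoin F {A, B}) ≤ n := by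
  have : FaithfulSMul (Matrix (Fin n) (Fin n) F) (Fin n → F) := ⟨Matrix.ext_iff_smul.mpr⟩
  simpa using gerstenhaber_general (F := F) (V := Fin n → F) (a := A) (b := B) hcomm
end

section
/- Let F be a field and let k ≥ 4 be a natural number. Then there exist a natural number n and pairwise commuting n×n matrices A₁, A₂, …, A_k over F such that the F-vector space dimension of the unital subalgebra of the n×n matrix algebra generated by A₁, …, A_k is strictly greater than n. -/
/-!
The matrix units in the upper right `p × q` corner multiply pairwise to zero. Together with the
identity they therefore span a commutative algebra, of dimension `p * q + 1`. This exceeds the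
matrix size `p + q` already for `p = q = 2`, where four matrix units generate the algebra; longer
families are obtained by repeating generators.
-/

section SquareZero

variable {R A : Type*}

theorem adjoin_toSubmodule_eq_span_insert_one_of_mul_eq_zero [CommSemiring R] [Semiring A]
    [Algebra R A] {s : Set A} (hs : ∀ x ∈ s, ∀ y ∈ s, x * y = 0) :
    Subalgebra.toSubmodule (Algebra.adjoin R s) = Submodule.span R (insert 1 s) := by
  have closure_subset : ∀ x ∈ Submonoid.closure s, x = 1 ∨ x ∈ s ∨ x = 0 := by
    intro x hx
    induction hx using Submonoid.closure_induction_left with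
    | one => exact .inl rfl
    | mul_left x hx y _ ih =>
      rcases ih with rfl | hy | rfl
      · exact .inr (.inl (by rwa [mul_one]))
      · exact .inr (.inr (hs x hx y hy))
      · exact .inr (.inr (mul_zero x))
  apply le_antisymm
  · refine (Algebra.adjoin_toSubmodule_le R).mpr fun x hx => ?_
    rcases closure_subset x hx with rfl | hx | rfl
    · exact Submodule.subset_span (Set.mem_insert 1 s)
    · exact Submodule.subset_span (Set.mem_insert_of_mem 1 hx)
    · exact zero_mem _
  · exact Submodule.span_le.mpr
      (Set.insert_subset (one_mem (Algebra.adjoin R s)) Algebra.subset_adjoin)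

variable {ι : Type*} [CommRing R] [Ring A] [Algebra R A] {a : ι → A}

theorem linearIndependent_option_elim_one_of_mul_eq_zero [Nonempty ι] (ha : LinearIndependent R a)
    (hmul : ∀ i j, a i * a j = 0) :
    LinearIndependent R fun o : Option ι => o.elim 1 a := by
  rw [linearIndependent_iff]
  intro l hl
  have relation : l none • 1 + Finsupp.linearCombination R a l.some = 0 := by
    rw [Finsupp.linearCombination_option] at hl
    exact hl
  have coeff_one : l none = 0 := by
    obtain ⟨j⟩ := ‹Nonempty ι›
    have sum_mul : Finsupp.linearCombination R a l.some * a j = 0 := by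
      simp [Finsupp.linearCombination_apply, Finsupp.sum_mul, hmul]
    have : l none • a j = 0 := by
      simpa [add_mul, sum_mul] using congrArg (· * a j) relation
    exact ha.smul_left_injective j (by simpa using this)
  have coeff_some : l.some = 0 :=
    linearIndependent_iff.mp ha _ (by simpa [coeff_one] using relation)
  ext (_ | i)
  · exact coeff_one
  · exact DFunLike.congr_fun coeff_some i

theorem finrank_adjoin_range_of_mul_eq_zero [Nontrivial R] [Fintype ι] [Nonempty ι]
    (ha : LinearIndependent R a) (hmul : ∀ i j, a i * a j = 0) :
    Module.finrank R (Algebra.adjoin R (Set.range a)) = Fintype.card ι + 1 := by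
  have span_eq : Subalgebra.toSubmodule (Algebra.adjoin R (Set.range a)) =
      Submodule.span R (Set.range fun o : Option ι => o.elim 1 a) := by
    rw [Option.range_elim]
    apply adjoin_toSubmodule_eq_span_insert_one_of_mul_eq_zero
    rintro _ ⟨i, rfl⟩ _ ⟨j, rfl⟩
    exact hmul i j
  rw [← Subalgebra.finrank_toSubmodule, span_eq,
    finrank_span_eq_card (linearIndependent_option_elim_one_of_mul_eq_zero ha hmul),
    Fintype.card_option]

end SquareZero

section CornerUnit

variable (R : Type*) (p q : ℕ)

/-- The matrix units of the upper right `p × q` corner of a square matrix of size `p + q`. -/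
def cornerUnit [Zero R] [One R] (x : Fin p × Fin q) : Matrix (Fin (p + q)) (Fin (p + q)) R :=
  Matrix.single (Fin.castAdd q x.1) (Fin.natAdd p x.2) 1

theorem cornerUnit_mul_cornerUnit [NonAssocSemiring R] (x y : Fin p × Fin q) :
    cornerUnit R p q x * cornerUnit R p q y = 0 := by
  have column_ne_row : Fin.natAdd p x.2 ≠ Fin.castAdd q y.1 :=
    Fin.ne_of_gt (y.1.isLt.trans_le (Nat.le_add_right p x.2))
  exact Matrix.single_mul_single_of_ne _ _ _ _ column_ne_row _

theorem linearIndependent_cornerUnit [Semiring R] : LinearIndependent R (cornerUnit R p q) := by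
  have hinj : Function.Injective (Prod.map (Fin.castAdd q (n := p)) (Fin.natAdd p (m := q))) :=
    (Fin.castAdd_injective p q).prodMap (Fin.natAdd_injective q p)
  convert (Matrix.stdBasis R (Fin (p + q)) (Fin (p + q))).linearIndependent.comp _ hinj using 1
  ext1 x
  exact (Matrix.stdBasis_eq_single R _ _).symm

theorem finrank_adjoin_range_cornerUnit [CommRing R] [Nontrivial R] [NeZero p] [NeZero q] :
    Module.finrank R (Algebra.adjoin R (Set.range (cornerUnit R p q))) = p * q + 1 := by
  rw [finrank_adjoin_range_of_mul_eq_zero (linearIndependent_cornerUnit R p q)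
    (cornerUnit_mul_cornerUnit R p q), Fintype.card_prod, Fintype.card_fin, Fintype.card_fin]

end CornerUnit

theorem gerstenhaber_fails_for_four_or_more_general (R : Type*) [CommRing R] [Nontrivial R]
    (k : ℕ) (hk : 4 ≤ k) :
    ∃ (n : ℕ) (A : Fin k → Matrix (Fin n) (Fin n) R),
      (∀ i j, A i * A j = A j * A i) ∧
      n < Module.finrank R ↥(Algebra.adjoin R (Set.range A)) := by
  obtain ⟨f, hf⟩ : ∃ f : Fin k → Fin 2 × Fin 2, f.Surjective :=
    Function.exists_surjective_iff.mpr
      ⟨⟨fun _ => 0⟩, Function.Embedding.nonempty_of_card_le (by simpa using hk)⟩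
  refine ⟨2 + 2, cornerUnit R 2 2 ∘ f, fun i j => ?_, ?_⟩
  · simp only [Function.comp_apply, cornerUnit_mul_cornerUnit]
  · rw [hf.range_comp, finrank_adjoin_range_cornerUnit]
    norm_num

/-- Gerstenhaber's dimension bound fails for `k ≥ 4` commuting matrices: there exist
pairwise commuting `n × n` matrices `A 1, …, A k` over `F` whose generated unital
subalgebra has dimension greater than `n`. -/
theorem gerstenhaber_fails_for_four_or_more (F : Type*) [Field F] (k : ℕ) (hk : 4 ≤ k) :
    ∃ (n : ℕ) (A : Fin k → Matrix (Fin n) (Fin n) F),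
      (∀ i j, A i * A j = A j * A i) ∧
      n < Module.finrank F ↥(Algebra.adjoin F (Set.range A)) :=
  gerstenhaber_fails_for_four_or_more_general F k hk
end

section
/- Let F be an algebraically closed field and let A₁, …, A_k be pairwise commuting n×n matrices over F. Then there exists an invertible n×n matrix P over F such that for every i, the matrix P⁻¹ * Aᵢ * P is upper triangular, i.e. its (r, s) entry is 0 whenever s < r (indices ordered as elements of Fin n). -/
/-!
Commuting endomorphisms with split minimal polynomials have a common eigenvector: in a minimal
nonzero common invariant subspace `W`, each endomorphism has an eigenvalue, and the corresponding
eigenspace meets `W` in a common invariant subspace, hence contains `W`. The line through such a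
vector gives the first column of a triangular form, and the quotient by it gives the rest by
induction, since commutation and splitting pass to the quotient.
-/

open Module Module.End Polynomial

section MinimalPolynomial

theorem comp_aeval_of_comp_eq {R M N : Type*} [CommSemiring R]
    [AddCommMonoid M] [Module R M] [AddCommMonoid N] [Module R N]
    {f : End R M} {f' : End R N} {g : M →ₗ[R] N} (h : g ∘ₗ f = f' ∘ₗ g) (p : R[X]) :
    g ∘ₗ aeval f p = aeval f' p ∘ₗ g := by
  induction p using Polynomial.induction_on' with
  | add p q hp hq => simp only [map_add, LinearMap.comp_add, LinearMap.add_comp, hp, hq]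
  | monomial k a =>
    simp only [aeval_monomial, ← Algebra.smul_def, LinearMap.comp_smul, LinearMap.smul_comp,
      commute_pow_left_of_commute h.symm k]

variable {K V W : Type*} [Field K] [AddCommGroup V] [Module K V] [AddCommGroup W] [Module K W]

theorem minpoly_dvd_of_comp_eq_of_injective {f : End K V} {f' : End K W} {g : V →ₗ[K] W}
    (h : g ∘ₗ f = f' ∘ₗ g) (hg : Function.Injective g) : minpoly K f ∣ minpoly K f' :=
  minpoly.dvd K f <| LinearMap.cancel_left hg |>.mp <| by
    rw [comp_aeval_of_comp_eq h, minpoly.aeval, LinearMap.zero_comp, LinearMap.comp_zero]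

theorem minpoly_dvd_of_comp_eq_of_surjective {f : End K V} {f' : End K W} {g : V →ₗ[K] W}
    (h : g ∘ₗ f = f' ∘ₗ g) (hg : Function.Surjective g) : minpoly K f' ∣ minpoly K f :=
  minpoly.dvd K f' <| LinearMap.cancel_right hg |>.mp <| by
    rw [← comp_aeval_of_comp_eq h, minpoly.aeval, LinearMap.zero_comp, LinearMap.comp_zero]

end MinimalPolynomial

section CommonEigenvector

variable {K V : Type*} [Field K] [AddCommGroup V] [Module K V] [FiniteDimensional K V]

theorem exists_hasEigenvalue_of_minpoly_splits [Nontrivial V] {f : End K V}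
    (hf : (minpoly K f).Splits) : ∃ μ, f.HasEigenvalue μ := by
  have hdeg : (minpoly K f).degree ≠ 0 := (minpoly.degree_pos (Algebra.IsIntegral.isIntegral f)).ne'
  obtain ⟨μ, hμ⟩ := hf.exists_eval_eq_zero hdeg
  exact ⟨μ, hasEigenvalue_of_isRoot hμ⟩

theorem exists_inf_eigenspace_ne_bot {f : End K V} (hf : (minpoly K f).Splits)
    {W : Submodule K V} (hW : W ≠ ⊥) (hfW : W ∈ f.invtSubmodule) :
    ∃ μ, W ⊓ f.eigenspace μ ≠ ⊥ := by
  have : Nontrivial W := Submodule.nontrivial_iff_ne_bot.mpr hW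
  have hdvd : minpoly K (f.restrict hfW) ∣ minpoly K f :=
    minpoly_dvd_of_comp_eq_of_injective (LinearMap.subtype_comp_restrict hfW) W.subtype_injective
  have hsplits : (minpoly K (f.restrict hfW)).Splits :=
    hf.of_dvd (minpoly.ne_zero_of_finite K f) hdvd
  obtain ⟨μ, hμ⟩ := exists_hasEigenvalue_of_minpoly_splits hsplits
  obtain ⟨w, hw⟩ := hμ.exists_hasEigenvector
  have hfw : f w = μ • (w : V) := congrArg Subtype.val hw.apply_eq_smul
  have hw0 : (w : V) ≠ 0 := Subtype.coe_ne_coe.mpr hw.2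
  exact ⟨μ, Submodule.ne_bot_iff _ |>.mpr ⟨w, ⟨w.2, mem_eigenspace_iff.mpr hfw⟩, hw0⟩⟩

theorem exists_common_eigenvector [Nontrivial V] {ι : Type*} {f : ι → End K V}
    (hcomm : ∀ i j, Commute (f i) (f j)) (hf : ∀ i, (minpoly K (f i)).Splits) :
    ∃ v : V, v ≠ 0 ∧ ∀ i, ∃ μ : K, f i v = μ • v := by
  obtain ⟨W, ⟨hW, hfW⟩, hmin⟩ := exists_minimal_of_wellFoundedLT
    (fun W : Submodule K V ↦ W ≠ ⊥ ∧ ∀ i, W ∈ (f i).invtSubmodule)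
    ⟨⊤, top_ne_bot, fun i ↦ invtSubmodule.top_mem (f i)⟩
  obtain ⟨v, hvW, hv⟩ := W.ne_bot_iff.mp hW
  refine ⟨v, hv, fun i ↦ ?_⟩
  obtain ⟨μ, hμ⟩ := exists_inf_eigenspace_ne_bot (hf i) hW (hfW i)
  have hinv (j : ι) : W ⊓ (f i).eigenspace μ ∈ (f j).invtSubmodule :=
    invtSubmodule.inf_mem (hfW j) (mapsTo_genEigenspace_of_comm (hcomm i j) μ 1)
  have hle : W ≤ (f i).eigenspace μ := (hmin ⟨hμ, hinv⟩ inf_le_left).trans inf_le_right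
  exact ⟨μ, mem_eigenspace_iff.mp (hle hvW)⟩

end CommonEigenvector

theorem commute_mapQ {R V : Type*} [Ring R] [AddCommGroup V] [Module R V] {W : Submodule R V}
    {f g : End R V} (hfg : Commute f g) (hf : W ≤ W.comap f) (hg : W ≤ W.comap g) :
    Commute (W.mapQ W f hf) (W.mapQ W g hg) := by
  refine Submodule.linearMap_qext W (LinearMap.ext fun x ↦ ?_)
  exact congrArg W.mkQ (LinearMap.congr_fun hfg.eq x)

section UpperTriangular

open LinearMap (toMatrix)

theorem isUpperTriangular_toMatrix_reindex {R M m n : Type*} [CommSemiring R] [AddCommMonoid M]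
    [Module R M] [Fintype m] [DecidableEq m] [Preorder m] [Fintype n] [DecidableEq n] [Preorder n]
    {f : End R M} {b : Basis m R M} (h : (toMatrix b b f).IsUpperTriangular) (e : m ≃o n) :
    (toMatrix (b.reindex e.toEquiv) (b.reindex e.toEquiv) f).IsUpperTriangular := by
  intro r s hsr
  rw [LinearMap.toMatrix_apply, Basis.repr_reindex_apply, Basis.reindex_apply,
    ← LinearMap.toMatrix_apply]
  exact h (e.symm.lt_iff_lt.mpr hsr)

theorem isUpperTriangular_toMatrix_sumQuot {R V m n : Type*} [CommRing R] [AddCommGroup V]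
    [Module R V] [Fintype m] [DecidableEq m] [LT m] [Fintype n] [DecidableEq n] [LT n]
    {W : Submodule R V} {f : End R V} (hfW : W ≤ W.comap f) {bW : Basis m R W}
    {bQ : Basis n R (V ⧸ W)}
    (hW : (toMatrix bW bW (f.restrict hfW)).IsUpperTriangular)
    (hQ : (toMatrix bQ bQ (W.mapQ W f hfW)).IsUpperTriangular) :
    (toMatrix ((bW.sumQuot bQ).reindex toLex) ((bW.sumQuot bQ).reindex toLex)
      f).IsUpperTriangular := by
  have hfbW (j : m) : f (bW j) ∈ W := hfW (bW j).2
  intro r s hsr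
  obtain ⟨r, rfl⟩ := toLex.surjective r
  obtain ⟨s, rfl⟩ := toLex.surjective s
  rw [LinearMap.toMatrix_apply, Basis.repr_reindex_apply, Basis.reindex_apply,
    Equiv.symm_apply_apply, Equiv.symm_apply_apply]
  rcases r with r | r <;> rcases s with s | s
  · rw [Basis.sumQuot_inl, Basis.sumQuot_repr_inl_of_mem _ _ _ (hfbW s)]
    have hentry := hW (Sum.Lex.inl_lt_inl_iff.mp hsr)
    rwa [LinearMap.toMatrix_apply] at hentry
  · exact absurd hsr Sum.Lex.not_inr_lt_inl
  · rw [Basis.sumQuot_inl, Basis.sumQuot_repr_inr_of_mem _ _ _ (hfbW s)]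
  · rw [Basis.sumQuot_repr_inr]
    have hentry := hQ (Sum.Lex.inr_lt_inr_iff.mp hsr)
    rwa [LinearMap.toMatrix_apply, ← Basis.sumQuot_inr bW bQ, Submodule.mapQ_apply] at hentry

theorem exists_basis_isUpperTriangular_toMatrix {K V ι : Type*} [Field K] [AddCommGroup V]
    [Module K V] [FiniteDimensional K V] {f : ι → End K V}
    (hcomm : ∀ i j, Commute (f i) (f j)) (hf : ∀ i, (minpoly K (f i)).Splits) :
    ∃ b : Basis (Fin (finrank K V)) K V, ∀ i, (toMatrix b b (f i)).IsUpperTriangular := by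
  induction hd : finrank K V generalizing V with
  | zero => exact ⟨finBasisOfFinrankEq K V hd, fun i r ↦ r.elim0⟩
  | succ d ih =>
    have : Nontrivial V := nontrivial_of_finrank_pos (R := K) (by lia)
    obtain ⟨v, hv, hfv⟩ := exists_common_eigenvector hcomm hf
    let W := K ∙ v
    have hW : finrank K W = 1 := finrank_span_singleton hv
    have hfW (i : ι) : W ≤ W.comap (f i) := by
      obtain ⟨μ, hμ⟩ := hfv i
      rw [Submodule.span_singleton_le_iff_mem, Submodule.mem_comap, hμ]
      exact W.smul_mem μ (Submodule.mem_span_singleton_self v)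
    have hsplits (i : ι) : (minpoly K (W.mapQ W (f i) (hfW i))).Splits :=
      (hf i).of_dvd (minpoly.ne_zero_of_finite K (f i)) <|
        minpoly_dvd_of_comp_eq_of_surjective (W.mapQ_mkQ W (f i)).symm W.mkQ_surjective
    have hquot : finrank K (V ⧸ W) = d := by
      have := W.finrank_quotient_add_finrank
      lia
    obtain ⟨bQ, hbQ⟩ := ih (fun i j ↦ commute_mapQ (hcomm i j) (hfW i) (hfW j)) hsplits hquot
    let bW : Basis (Fin 1) K W := finBasisOfFinrankEq K W hW
    have hbW (i : ι) : (toMatrix bW bW ((f i).restrict (hfW i))).IsUpperTriangular :=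
      fun r s hsr ↦ absurd (Subsingleton.elim s r) hsr.ne
    have hcard : Fintype.card (Fin 1 ⊕ₗ Fin d) = d + 1 := by
      rw [Fintype.card_lex, Fintype.card_sum, Fintype.card_fin, Fintype.card_fin, add_comm]
    let e : Fin 1 ⊕ₗ Fin d ≃o Fin (d + 1) := (Fintype.orderIsoFinOfCardEq _ hcard).symm
    refine ⟨((bW.sumQuot bQ).reindex toLex).reindex e.toEquiv, fun i ↦ ?_⟩
    have htri := isUpperTriangular_toMatrix_sumQuot (hfW i) (hbW i) (hbQ i)
    exact isUpperTriangular_toMatrix_reindex htri e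

end UpperTriangular

theorem inv_basisFun_toMatrix_mul_mul_basisFun_toMatrix {R n : Type*} [CommRing R] [Fintype n]
    [DecidableEq n] (b : Basis n R (n → R)) (A : Matrix n n R) :
    ((Pi.basisFun R n).toMatrix b)⁻¹ * A * (Pi.basisFun R n).toMatrix b =
      LinearMap.toMatrix b b A.toLin' := by
  have hinv : ((Pi.basisFun R n).toMatrix b)⁻¹ = b.toMatrix (Pi.basisFun R n) :=
    Matrix.inv_eq_right_inv ((Pi.basisFun R n).toMatrix_mul_toMatrix_flip b)
  rw [hinv, ← basis_toMatrix_mul_linearMap_toMatrix_mul_basis_toMatrix b (Pi.basisFun R n) b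
    (Pi.basisFun R n), LinearMap.toMatrix_eq_toMatrix', LinearMap.toMatrix'_toLin']

theorem simultaneous_triangularization_general {K ι n : Type*} [Field K] [Fintype n]
    [LinearOrder n] (A : ι → Matrix n n K) (hcomm : ∀ i j, A i * A j = A j * A i)
    (hA : ∀ i, (minpoly K (A i)).Splits) :
    ∃ P : Matrix n n K, IsUnit P ∧ ∀ i, (P⁻¹ * A i * P).IsUpperTriangular := by
  obtain ⟨b, hb⟩ := exists_basis_isUpperTriangular_toMatrix (f := fun i ↦ (A i).toLin')
    (fun i j ↦ (show Commute (A i) (A j) from hcomm i j).map Matrix.toLinAlgEquiv')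
    (fun i ↦ by simpa only [Matrix.minpoly_toLin'] using hA i)
  let e : Fin (finrank K (n → K)) ≃o n :=
    Fintype.orderIsoFinOfCardEq n (finrank_fintype_fun_eq_card K).symm
  let b' : Basis n K (n → K) := b.reindex e.toEquiv
  refine ⟨(Pi.basisFun K n).toMatrix b', IsUnit.of_mul_eq_one _
    ((Pi.basisFun K n).toMatrix_mul_toMatrix_flip b'), fun i ↦ ?_⟩
  rw [inv_basisFun_toMatrix_mul_mul_basisFun_toMatrix]
  exact isUpperTriangular_toMatrix_reindex (hb i) e

/-- Simultaneous triangularization: pairwise commuting matrices over an algebraically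
closed field can be simultaneously conjugated to upper triangular form. -/
theorem simultaneous_triangularization (F : Type*) [Field F] [IsAlgClosed F]
    (n k : ℕ) (A : Fin k → Matrix (Fin n) (Fin n) F)
    (hcomm : ∀ i j, A i * A j = A j * A i) :
    ∃ P : Matrix (Fin n) (Fin n) F, IsUnit P ∧
      ∀ i, ∀ r s : Fin n, s < r → (P⁻¹ * A i * P) r s = 0 := by
  obtain ⟨P, hP, hA⟩ :=
    simultaneous_triangularization_general A hcomm fun i ↦ IsAlgClosed.splits (minpoly F (A i))
  exact ⟨P, hP, fun i _ _ hsr ↦ hA i hsr⟩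
end

section
/- Let F be a field and let A₁, …, A_k be pairwise commuting nilpotent n×n matrices over F. Then there exists an invertible n×n matrix P over F such that for every i, the matrix P⁻¹ * Aᵢ * P is strictly upper triangular, i.e. its (r, s) entry is 0 whenever s ≤ r (indices ordered as elements of Fin n). -/
/-!
Let `W` be a proper subspace invariant under a family of commuting nilpotent operators `f i`, and
let `U` be minimal among the invariant subspaces strictly containing `W`. Since `f i` is nilpotent,
`U ⊓ (f i)⁻¹ W` strictly contains `W`, and it is invariant because the operators commute, so it
equals `U`. Thus every `f i` maps `U` into `W`: any `x ∈ U \ W` extends a basis of `W` by one vector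
while keeping each `f i` strictly triangular. Starting from `W = 0` this produces a basis of the
whole space.
-/

open Module Submodule Set

section InvariantSubmodules

variable {R M ι : Type*} [Semiring R] [AddCommMonoid M] [Module R M]

theorem exists_mem_notMem_apply_mem_of_isNilpotent {g : End R M} (hg : IsNilpotent g)
    {W U : Submodule R M} (hWU : W < U) (hU : U ∈ g.invtSubmodule) :
    ∃ x ∈ U, x ∉ W ∧ g x ∈ W := by
  by_contra! h
  have mem_of_pow_mem (p : ℕ) : ∀ x ∈ U, (g ^ p) x ∈ W → x ∈ W := by
    induction p with
    | zero => exact fun x _ hx ↦ hx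
    | succ p ih =>
      intro x hxU hx
      by_contra hxW
      exact h x hxU hxW (ih (g x) (hU hxU) hx)
  obtain ⟨x, hxU, hxW⟩ := SetLike.exists_of_lt hWU
  obtain ⟨p, hp⟩ := hg
  exact hxW (mem_of_pow_mem p x hxU (by simp [hp]))

theorem comap_mem_invtSubmodule_of_commute {g h : End R M} (hgh : Commute g h)
    {W : Submodule R M} (hW : W ∈ h.invtSubmodule) : W.comap g ∈ h.invtSubmodule := by
  intro x hx
  have hswap : g (h x) = h (g x) := LinearMap.congr_fun hgh.eq x
  rw [mem_comap, mem_comap, hswap]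
  exact hW hx

theorem exists_notMem_forall_apply_mem_of_isNilpotent [IsArtinian R M] {f : ι → End R M}
    (hcomm : ∀ i j, Commute (f i) (f j)) (hnil : ∀ i, IsNilpotent (f i))
    {W : Submodule R M} (hW : W ≠ ⊤) (hinv : ∀ i, W ∈ (f i).invtSubmodule) :
    ∃ x ∉ W, ∀ i, f i x ∈ W := by
  obtain ⟨U, ⟨hWU, hU⟩, hmin⟩ := exists_minimal_of_wellFoundedLT
    (fun U ↦ W < U ∧ ∀ i, U ∈ (f i).invtSubmodule) ⟨⊤, hW.lt_top, fun i ↦ by simp⟩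
  have apply_mem (i : ι) : U ≤ W.comap (f i) := by
    obtain ⟨y, hyU, hyW, hy⟩ := exists_mem_notMem_apply_mem_of_isNilpotent (hnil i) hWU (hU i)
    have hlt : W < U ⊓ W.comap (f i) :=
      (le_inf hWU.le (hinv i)).lt_of_not_ge fun hle ↦ hyW (hle ⟨hyU, hy⟩)
    have hinvt (j : ι) : U ⊓ W.comap (f i) ∈ (f j).invtSubmodule :=
      End.invtSubmodule.inf_mem (hU j) (comap_mem_invtSubmodule_of_commute (hcomm i j) (hinv j))
    exact (hmin ⟨hlt, hinvt⟩ inf_le_left).trans inf_le_right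
  obtain ⟨x, hxU, hxW⟩ := SetLike.exists_of_lt hWU
  exact ⟨x, hxW, fun i ↦ apply_mem i hxU⟩

theorem span_range_mem_invtSubmodule {m : Type*} [Preorder m] {g : End R M} {v : m → M}
    (hv : ∀ s, g (v s) ∈ span R (v '' Iio s)) : span R (range v) ∈ g.invtSubmodule := by
  rw [End.mem_invtSubmodule, span_le]
  rintro _ ⟨s, rfl⟩
  exact span_mono (image_subset_range v _) (hv s)

theorem apply_finSnoc_mem_span {d : ℕ} {g : End R M} {v : Fin d → M} {x : M}
    (hv : ∀ s, g (v s) ∈ span R (v '' Iio s)) (hx : g x ∈ span R (range v)) (s : Fin (d + 1)) :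
    g (Fin.snoc (α := fun _ ↦ M) v x s) ∈
      span R (Fin.snoc (α := fun _ ↦ M) v x '' Iio s) := by
  cases s using Fin.lastCases with
  | last =>
    rw [Fin.snoc_last]
    refine span_mono ?_ hx
    rintro _ ⟨t, rfl⟩
    exact ⟨t.castSucc, t.castSucc_lt_last, Fin.snoc_castSucc ..⟩
  | cast s =>
    rw [Fin.snoc_castSucc]
    refine span_mono ?_ (hv s)
    rintro _ ⟨t, ht, rfl⟩
    exact ⟨t.castSucc, Fin.castSucc_lt_castSucc_iff.mpr ht, Fin.snoc_castSucc ..⟩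

end InvariantSubmodules

section TriangularizingBasis

variable {K V ι : Type*} [DivisionRing K] [AddCommGroup V] [Module K V] [FiniteDimensional K V]
  {f : ι → End K V}

theorem exists_linearIndependent_apply_mem_span_Iio (hcomm : ∀ i j, Commute (f i) (f j))
    (hnil : ∀ i, IsNilpotent (f i)) {d : ℕ} (hd : d ≤ finrank K V) :
    ∃ v : Fin d → V, LinearIndependent K v ∧ ∀ i s, f i (v s) ∈ span K (v '' Iio s) := by
  induction d with
  | zero => exact ⟨Fin.elim0, linearIndependent_empty_type, fun _ s ↦ s.elim0⟩
  | succ d ih =>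
    obtain ⟨v, hv, hfv⟩ := ih (Nat.le_of_succ_le hd)
    have hspan : span K (range v) ≠ ⊤ := by
      intro htop
      have hrank := finrank_span_eq_card hv
      rw [htop, finrank_top, Fintype.card_fin] at hrank
      lia
    obtain ⟨x, hx, hfx⟩ := exists_notMem_forall_apply_mem_of_isNilpotent hcomm hnil hspan
      fun i ↦ span_range_mem_invtSubmodule (hfv i)
    exact ⟨Fin.snoc v x, linearIndependent_finSnoc.mpr ⟨hv, hx⟩,
      fun i ↦ apply_finSnoc_mem_span (hfv i) (hfx i)⟩

theorem exists_basis_apply_mem_span_Iio {m : Type*} [Fintype m] [LinearOrder m]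
    (hm : Fintype.card m = finrank K V) (hcomm : ∀ i j, Commute (f i) (f j))
    (hnil : ∀ i, IsNilpotent (f i)) :
    ∃ b : Basis m K V, ∀ i s, f i (b s) ∈ span K (b '' Iio s) := by
  obtain ⟨v, hv, hfv⟩ := exists_linearIndependent_apply_mem_span_Iio hcomm hnil le_rfl
  let e : Fin (finrank K V) ≃o m := monoEquivOfFin m hm
  let b := (basisOfLinearIndependentOfCardEqFinrank' v hv (Fintype.card_fin _)).reindex e.toEquiv
  have hb : ⇑b = v ∘ e.symm := by
    ext1 s
    simp [b]
  refine ⟨b, fun i s ↦ ?_⟩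
  have himage : e.symm '' Iio s = Iio (e.symm s) := e.symm.image_Iio s
  rw [hb, image_comp, himage]
  exact hfv i (e.symm s)

end TriangularizingBasis

section BasisMatrices

variable {R M m : Type*} [AddCommGroup M]

theorem mem_span_image_Iio_iff_repr_eq_zero [Semiring R] [Module R M] [LinearOrder m]
    (b : Basis m R M) {x : M} {s : m} :
    x ∈ span R (b '' Iio s) ↔ ∀ r, s ≤ r → b.repr x r = 0 := by
  simp only [b.mem_span_image, Finsupp.support_subset_iff, mem_Iio, not_lt]

theorem toMatrix_inv_mul_toMatrix_mul_toMatrix [CommRing R] [Module R M] [Fintype m] [DecidableEq m]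
    (b c : Basis m R M) (g : End R M) :
    (c.toMatrix b)⁻¹ * LinearMap.toMatrix c c g * c.toMatrix b = LinearMap.toMatrix b b g := by
  rw [Matrix.inv_eq_left_inv (b.toMatrix_mul_toMatrix_flip c),
    basis_toMatrix_mul_linearMap_toMatrix_mul_basis_toMatrix]

end BasisMatrices

theorem simultaneous_strict_triangularization_general {F m ι : Type*} [Field F] [Fintype m]
    [LinearOrder m] (A : ι → Matrix m m F) (hcomm : ∀ i j, Commute (A i) (A j))
    (hnil : ∀ i, IsNilpotent (A i)) :
    ∃ P : Matrix m m F, IsUnit P ∧ ∀ i, ∀ r s : m, s ≤ r → (P⁻¹ * A i * P) r s = 0 := by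
  obtain ⟨b, hb⟩ := exists_basis_apply_mem_span_Iio (V := m → F)
    (finrank_fintype_fun_eq_card F).symm
    (fun i j ↦ (hcomm i j).map Matrix.toLinAlgEquiv')
    (fun i ↦ (hnil i).map Matrix.toLinAlgEquiv')
  let c := Pi.basisFun F m
  have hunit : IsUnit (c.toMatrix b) :=
    IsUnit.of_mul_eq_one _ (c.toMatrix_mul_toMatrix_flip b)
  refine ⟨c.toMatrix b, hunit, fun i r s hsr ↦ ?_⟩
  have hconj : (c.toMatrix b)⁻¹ * A i * c.toMatrix b =
      LinearMap.toMatrix b b (Matrix.toLin' (A i)) := by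
    rw [← toMatrix_inv_mul_toMatrix_mul_toMatrix b c, ← Matrix.toLin_eq_toLin',
      LinearMap.toMatrix_toLin]
  rw [hconj, LinearMap.toMatrix_apply]
  exact (mem_span_image_Iio_iff_repr_eq_zero b).mp (hb i s) r hsr

/-- Simultaneous strict triangularization: pairwise commuting nilpotent matrices over
any field can be simultaneously conjugated to strictly upper triangular form. -/
theorem simultaneous_strict_triangularization (F : Type*) [Field F]
    (n k : ℕ) (A : Fin k → Matrix (Fin n) (Fin n) F)
    (hcomm : ∀ i j, A i * A j = A j * A i)
    (hnil : ∀ i, IsNilpotent (A i)) :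
    ∃ P : Matrix (Fin n) (Fin n) F, IsUnit P ∧
      ∀ i, ∀ r s : Fin n, s ≤ r → (P⁻¹ * A i * P) r s = 0 :=
  simultaneous_strict_triangularization_general A hcomm hnil
end

section
/- Let F be an algebraically closed field. Suppose that for every natural number m and all pairwise commuting nilpotent m×m matrices A, B, C over F, the F-vector space dimension of the unital subalgebra generated by A, B, C is at most m. Then for every natural number n and all pairwise commuting n×n matrices A, B, C over F, the F-vector space dimension of the unital subalgebra generated by A, B, C is at most n. -/
/-!
The joint generalized eigenspaces `V_χ` of a commuting family `f` of triangularizable endomorphisms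
of `V` decompose `V` and are invariant under the unital algebra generated by `f`. Restriction embeds
this algebra into the product of its images in the algebras `End V_χ`, so it suffices to bound the
dimension of each image by `dim V_χ`. On `V_χ` each `f i - χ i` is nilpotent, and shifting the
generators by scalars does not change the unital algebra they generate.
-/

open Module Algebra

section Adjoin

variable {F R S ι : Type*}

theorem adjoin_range_sub_algebraMap [CommRing F] [Ring R] [Algebra F R] (x : ι → R) (c : ι → F) :
    adjoin F (Set.range fun i ↦ x i - algebraMap F R (c i)) = adjoin F (Set.range x) := by
  apply le_antisymm <;> refine adjoin_le ?_ <;> rintro _ ⟨i, rfl⟩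
  · exact sub_mem (subset_adjoin ⟨i, rfl⟩) (algebraMap_mem _ (c i))
  · have hsub : x i - algebraMap F R (c i) ∈
        adjoin F (Set.range fun i ↦ x i - algebraMap F R (c i)) := subset_adjoin ⟨i, rfl⟩
    simpa using add_mem hsub (algebraMap_mem _ (c i))

variable [CommSemiring F] [Semiring R] [Algebra F R] [Semiring S] [Algebra F S]

theorem finrank_adjoin_range_algEquiv (e : R ≃ₐ[F] S) (x : ι → R) :
    finrank F (adjoin F (Set.range fun i ↦ e (x i))) = finrank F (adjoin F (Set.range x)) := by
  have hmap : (adjoin F (Set.range x)).map (e : R →ₐ[F] S) =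
      adjoin F (Set.range fun i ↦ e (x i)) := by
    rw [AlgHom.map_adjoin, ← Set.range_comp]
    rfl
  rw [← hmap]
  exact ((adjoin F (Set.range x)).equivMapOfInjective _ e.injective).toLinearEquiv.finrank_eq.symm

theorem range_algHom_adjoin_range (x : ι → R) (φ : adjoin F (Set.range x) →ₐ[F] S) :
    φ.range = adjoin F (Set.range fun i ↦ φ ⟨x i, subset_adjoin ⟨i, rfl⟩⟩) := by
  have hpre : ((↑) : adjoin F (Set.range x) → R) ⁻¹' Set.range x =
      Set.range fun i ↦ ⟨x i, subset_adjoin ⟨i, rfl⟩⟩ := by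
    ext y
    simp [Subtype.ext_iff]
  rw [← Algebra.map_top, ← adjoin_adjoin_coe_preimage, AlgHom.map_adjoin, hpre, ← Set.range_comp]
  rfl

end Adjoin

theorem finrank_le_sum_finrank_range_of_injective {F R σ : Type*} {B : σ → Type*} [Field F]
    [Ring R] [Algebra F R] [∀ i, Ring (B i)] [∀ i, Algebra F (B i)]
    [∀ i, FiniteDimensional F (B i)] [Fintype σ] (φ : ∀ i, R →ₐ[F] B i)
    (hφ : Function.Injective fun a i ↦ φ i a) :
    finrank F R ≤ ∑ i, finrank F (φ i).range := by
  let ψ : R →ₗ[F] Π i, (φ i).range := LinearMap.pi fun i ↦ (φ i).rangeRestrict.toLinearMap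
  have hψ : Function.Injective ψ := fun a b hab ↦
    hφ (funext fun i ↦ congrArg Subtype.val (congrFun hab i))
  calc finrank F R ≤ finrank F (Π i, (φ i).range) := LinearMap.finrank_le_finrank_of_injective hψ
    _ = ∑ i, finrank F (φ i).range := finrank_pi_fintype F

/-- The restriction to an invariant submodule `W`, as a homomorphism from an algebra `R` of
endomorphisms to the endomorphism algebra of `W`. -/
def restrictAlgHom {F V : Type*} [CommSemiring F] [AddCommMonoid V] [Module F V]
    {R : Subalgebra F (End F V)} {W : Submodule F V} (hW : ∀ a ∈ R, Set.MapsTo a W W) :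
    R →ₐ[F] End F W where
  toFun a := a.1.restrict (hW a a.2)
  map_one' := rfl
  map_mul' _ _ := rfl
  map_zero' := rfl
  map_add' _ _ := rfl
  commutes' _ := rfl

theorem injective_restrictAlgHom {F V σ : Type*} [CommSemiring F] [AddCommMonoid V] [Module F V]
    {R : Subalgebra F (End F V)} {W : σ → Submodule F V}
    (hR : ∀ i, ∀ a ∈ R, Set.MapsTo a (W i) (W i)) (hW : ⨆ i, W i = ⊤) :
    Function.Injective fun (a : R) i ↦ restrictAlgHom (hR i) a := by
  intro a b hab
  ext v
  have hv : v ∈ ⨆ i, W i := hW ▸ Submodule.mem_top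
  induction hv using Submodule.iSup_induction' with
  | mem i v hv =>
    have hi : restrictAlgHom (hR i) a = restrictAlgHom (hR i) b := congrFun hab i
    exact congrArg Subtype.val (DFunLike.congr_fun hi ⟨v, hv⟩)
  | zero => simp only [map_zero]
  | add v w _ _ hv hw => rw [map_add, map_add, hv, hw]

section DirectSum

variable {F V σ : Type*} [Field F] [AddCommGroup V] [Module F V] [FiniteDimensional F V]
  {W : σ → Submodule F V}

theorem finrank_eq_sum_of_isInternal [Fintype σ] [DecidableEq σ]
    (hW : DirectSum.IsInternal W) : finrank F V = ∑ i, finrank F (W i) := by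
  rw [← finrank_directSum]
  exact (LinearEquiv.ofBijective (DirectSum.coeLinearMap W) hW).finrank_eq.symm

theorem finrank_subalgebra_le_of_isInternal [DecidableEq σ] {R : Subalgebra F (End F V)}
    (hR : ∀ i, ∀ a ∈ R, Set.MapsTo a (W i) (W i)) (hW : DirectSum.IsInternal W)
    (h : ∀ i, finrank F (restrictAlgHom (hR i)).range ≤ finrank F (W i)) :
    finrank F R ≤ finrank F V := by
  have : Fintype {i // W i ≠ ⊥} :=
    (WellFoundedGT.finite_ne_bot_of_iSupIndep hW.submodule_iSupIndep).fintype
  have hW' : DirectSum.IsInternal fun i : {i // W i ≠ ⊥} ↦ W i :=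
    DirectSum.isInternal_ne_bot_iff.mpr hW
  calc finrank F R ≤ ∑ i : {i // W i ≠ ⊥}, finrank F (restrictAlgHom (hR i)).range :=
        finrank_le_sum_finrank_range_of_injective _ <|
          injective_restrictAlgHom (fun i : {i // W i ≠ ⊥} ↦ hR i) hW'.submodule_iSup_eq_top
    _ ≤ ∑ i : {i // W i ≠ ⊥}, finrank F (W i) := Finset.sum_le_sum fun i _ ↦ h i
    _ = finrank F V := (finrank_eq_sum_of_isInternal hW').symm

end DirectSum

section GenEigenspace

variable {F V ι : Type*}

section CommRing

variable [CommRing F] [AddCommGroup V] [Module F V]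

theorem isNilpotent_restrict_sub_algebraMap_of_le_maxGenEigenspace [IsNoetherian F V] {g : End F V}
    {μ : F} {W : Submodule F V} (hW : W ≤ g.maxGenEigenspace μ) (hg : Set.MapsTo g W W) :
    IsNilpotent (g.restrict hg - algebraMap F (End F W) μ) := by
  have hsub : Set.MapsTo (g - algebraMap F (End F V) μ) W W := fun v hv ↦
    sub_mem (hg hv) (W.smul_mem μ hv)
  have hrestrict : g.restrict hg - algebraMap F (End F W) μ =
      (g - algebraMap F (End F V) μ).restrict hsub := rfl
  rw [hrestrict]
  exact End.isNilpotent_restrict_of_le hW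
    (End.isNilpotent_restrict_maxGenEigenspace_sub_algebraMap g μ)

theorem mapsTo_iInf_maxGenEigenspace_of_mem_adjoin {f : ι → End F V}
    (hf : ∀ i j, Commute (f i) (f j)) (χ : ι → F) (a : End F V) (ha : a ∈ adjoin F (Set.range f)) :
    Set.MapsTo a ↑(⨅ i, (f i).maxGenEigenspace (χ i)) ↑(⨅ i, (f i).maxGenEigenspace (χ i)) := by
  have hcomm : ∀ i, Commute (f i) a := fun i ↦
    commute_of_mem_adjoin_of_forall_mem_commute ha (Set.forall_mem_range.mpr (hf i))
  simp only [Submodule.coe_iInf]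
  exact Set.mapsTo_iInter_iInter fun i ↦ End.mapsTo_maxGenEigenspace_of_comm (hcomm i) (χ i)

end CommRing

variable [Field F] [AddCommGroup V] [Module F V] [FiniteDimensional F V] {f : ι → End F V}

theorem isInternal_iInf_maxGenEigenspace [DecidableEq (ι → F)]
    (hf : ∀ i j, Commute (f i) (f j)) (htri : ∀ i, ⨆ μ, (f i).maxGenEigenspace μ = ⊤) :
    DirectSum.IsInternal fun χ : ι → F ↦ ⨅ i, (f i).maxGenEigenspace (χ i) :=
  DirectSum.isInternal_submodule_of_iSupIndep_of_iSup_eq_top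
    (End.independent_iInf_maxGenEigenspace_of_forall_mapsTo f fun i j ↦
      End.mapsTo_maxGenEigenspace_of_comm (hf j i))
    (End.iSup_iInf_maxGenEigenspace_eq_top_of_iSup_maxGenEigenspace_eq_top_of_commute f
      (fun i j _ ↦ hf i j) htri)

theorem finrank_adjoin_range_le_of_forall_isNilpotent
    (hf : ∀ i j, Commute (f i) (f j)) (htri : ∀ i, ⨆ μ, (f i).maxGenEigenspace μ = ⊤)
    (H : ∀ (W : Submodule F V) (g : ι → End F W), (∀ i j, Commute (g i) (g j)) →
      (∀ i, IsNilpotent (g i)) → finrank F (adjoin F (Set.range g)) ≤ finrank F W) :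
    finrank F (adjoin F (Set.range f)) ≤ finrank F V := by
  classical
  refine finrank_subalgebra_le_of_isInternal (mapsTo_iInf_maxGenEigenspace_of_mem_adjoin hf)
    (isInternal_iInf_maxGenEigenspace hf htri) fun χ ↦ ?_
  rw [range_algHom_adjoin_range, ← adjoin_range_sub_algebraMap (c := χ)]
  refine H _ _ (fun i j ↦ ?_) fun i ↦ ?_
  · have hcomm : Commute (⟨f i, subset_adjoin ⟨i, rfl⟩⟩ : adjoin F (Set.range f))
        ⟨f j, subset_adjoin ⟨j, rfl⟩⟩ := Subtype.ext (hf i j)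
    exact ((hcomm.map _).sub_left (commute_algebraMap_left _ _)).sub_right
      (commute_algebraMap_right _ _)
  · have hle : ⨅ j, (f j).maxGenEigenspace (χ j) ≤ (f i).maxGenEigenspace (χ i) := iInf_le _ i
    exact isNilpotent_restrict_sub_algebraMap_of_le_maxGenEigenspace hle
      (mapsTo_iInf_maxGenEigenspace_of_mem_adjoin hf χ (f i) (subset_adjoin ⟨i, rfl⟩))

end GenEigenspace

theorem range_fin_three {α : Type*} (x : Fin 3 → α) : Set.range x = {x 0, x 1, x 2} := by
  ext
  simp [Fin.exists_fin_succ, eq_comm]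

theorem gerstenhaber_reduction_to_nilpotent_general {F ι : Type*} [Field F] {n : ℕ}
    (H : ∀ m ≤ n, ∀ X : ι → Matrix (Fin m) (Fin m) F, (∀ i j, Commute (X i) (X j)) →
      (∀ i, IsNilpotent (X i)) → finrank F (adjoin F (Set.range X)) ≤ m)
    (X : ι → Matrix (Fin n) (Fin n) F) (hX : ∀ i j, Commute (X i) (X j))
    (htri : ∀ i, ⨆ μ, End.maxGenEigenspace (X i).toLin' μ = ⊤) :
    finrank F (adjoin F (Set.range X)) ≤ n := by
  rw [← finrank_adjoin_range_algEquiv Matrix.toLinAlgEquiv']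
  refine (finrank_adjoin_range_le_of_forall_isNilpotent
    (fun i j ↦ (hX i j).map Matrix.toLinAlgEquiv') htri
    fun W g hg hnil ↦ ?_).trans_eq (finrank_fin_fun F)
  let e := LinearMap.toMatrixAlgEquiv (finBasis F W)
  rw [← finrank_adjoin_range_algEquiv e]
  exact H _ (W.finrank_le.trans_eq (finrank_fin_fun F)) _ (fun i j ↦ (hg i j).map e)
    fun i ↦ (hnil i).map e

/-- Reduction of the Gerstenhaber Problem to the nilpotent case: if the dimension bound
holds for all pairwise commuting nilpotent triples over an algebraically closed field `F`,
then it holds for all pairwise commuting triples over `F`. -/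
theorem gerstenhaber_reduction_to_nilpotent (F : Type*) [Field F] [IsAlgClosed F]
    (H : ∀ (m : ℕ) (A B C : Matrix (Fin m) (Fin m) F),
      A * B = B * A → A * C = C * A → B * C = C * B →
      IsNilpotent A → IsNilpotent B → IsNilpotent C →
      Module.finrank F ↥(Algebra.adjoin F {A, B, C}) ≤ m) :
    ∀ (n : ℕ) (A B C : Matrix (Fin n) (Fin n) F),
      A * B = B * A → A * C = C * A → B * C = C * B →
      Module.finrank F ↥(Algebra.adjoin F {A, B, C}) ≤ n := by
  intro n A B C hAB hAC hBC
  have hcomm : ∀ i j, Commute (![A, B, C] i) (![A, B, C] j) := by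
    simp [Fin.forall_fin_succ, Commute, SemiconjBy, hAB, hAC, hBC]
  have hrange : Set.range ![A, B, C] = {A, B, C} := range_fin_three _
  exact hrange ▸ gerstenhaber_reduction_to_nilpotent_general
    (fun m _ X hX hnil ↦ range_fin_three X ▸ H m (X 0) (X 1) (X 2) (hX 0 1) (hX 0 2) (hX 1 2)
      (hnil 0) (hnil 1) (hnil 2)) ![A, B, C] hcomm fun _ ↦ End.iSup_maxGenEigenspace_eq_top _
end

section
/- Suppose that for every prime number p, every natural number n, and all pairwise commuting n×n matrices A, B, C over the field ZMod p of integers modulo p, the dimension of the unital subalgebra generated by A, B, C over ZMod p is at most n. Then for every field F, every natural number n, and all pairwise commuting n×n matrices A, B, C over F, the F-vector space dimension of the unital subalgebra generated by A, B, C is at most n. -/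
/-!
Spreading out reduces the theorem to finite fields: words in the given matrices that form a basis of
the generated algebra, together with a matrix witnessing their independence, are defined over a
finitely generated subring of `F`, and the residue fields of such a ring are finite.

Over a finite field `K`, let `R` be the algebra generated by the commuting matrices, acting
faithfully on `V = Kⁿ`. The bound says `|R| ≤ |V|`, which no longer mentions `K` and is
multiplicative along decompositions of `V`, so `R` may be taken local. A finite local ring contains
a copy of its residue field, whose unit group is cyclic. This allows one of the generators to be
modified so that the same number of elements generate `R` over the prime field, where the bound is
assumed.
-/

universe u

/-- The dimension bound of the Gerstenhaber problem over `R` for `ι`-indexed commuting families: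
`n × n` matrices `X i` that commute pairwise generate a unital algebra of rank at most `n`. The
original problem is the case `ι = Fin 3`. -/
def GerstenhaberBound (ι R : Type*) [CommRing R] : Prop :=
  ∀ (n : ℕ) (X : ι → Matrix (Fin n) (Fin n) R), (∀ i j, Commute (X i) (X j)) →
    Module.finrank R (Algebra.adjoin R (Set.range X)) ≤ n

theorem gerstenhaberBound_fin_three_iff {R : Type*} [CommRing R] :
    GerstenhaberBound (Fin 3) R ↔ ∀ (n : ℕ) (A B C : Matrix (Fin n) (Fin n) R),
      A * B = B * A → A * C = C * A → B * C = C * B →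
      Module.finrank R (Algebra.adjoin R {A, B, C}) ≤ n := by
  have range_eq {n : ℕ} (A B C : Matrix (Fin n) (Fin n) R) :
      Set.range ![A, B, C] = {A, B, C} := by
    simp only [Matrix.range_cons, Matrix.range_empty, Set.union_empty, Set.singleton_union]
  refine ⟨fun h n A B C hAB hAC hBC => ?_, fun h n X hX => ?_⟩
  · rw [← range_eq]
    refine h n _ fun i j => ?_
    fin_cases i <;> fin_cases j <;> simp [Commute, SemiconjBy, *]
  · have hX_eq : X = ![X 0, X 1, X 2] := by ext i : 1; fin_cases i <;> rfl
    rw [hX_eq, range_eq]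
    exact h n _ _ _ (hX 0 1) (hX 0 2) (hX 1 2)

section FaithfulModules

theorem finite_of_faithfulSMul (R V : Type*) [SMul R V] [FaithfulSMul R V] [Finite V] :
    Finite R :=
  .of_injective (fun (r : R) (v : V) => r • v) fun _ _ h => eq_of_smul_eq_smul (congrFun h)

variable {R V : Type*} [CommRing R] [AddCommGroup V] [Module R V]

theorem isUnit_of_injective_smul [IsArtinianRing R] [FaithfulSMul R V] {a : R}
    (ha : Function.Injective fun v : V => a • v) : IsUnit a := by
  refine IsArtinianRing.isUnit_of_mem_nonZeroDivisors (mem_nonZeroDivisors_iff_right.2 ?_)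
  refine fun r hr => FaithfulSMul.eq_of_smul_eq_smul fun v : V => ha ?_
  simp only [← mul_smul, mul_comm a, hr, zero_mul]

/-- Fitting's lemma for a scalar `a` such that neither `a` nor `1 - a` is a unit. -/
theorem exists_isCompl_of_not_isLocalRing [IsArtinianRing R] [Nontrivial R] [Module.Finite R V]
    [FaithfulSMul R V] (hR : ¬IsLocalRing R) :
    ∃ N P : Submodule R V, IsCompl N P ∧ N ≠ ⊤ ∧ P ≠ ⊤ := by
  obtain ⟨a, ha, ha'⟩ : ∃ a : R, ¬IsUnit a ∧ ¬IsUnit (1 - a) := by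
    by_contra! h
    exact hR (.of_isUnit_or_isUnit_one_sub_self fun a => or_iff_not_imp_left.2 (h a))
  let f : Module.End R V := algebraMap R _ a
  obtain ⟨n, hn, hn0⟩ :=
    (f.eventually_isCompl_ker_pow_range_pow.and (Filter.eventually_ne_atTop 0)).exists
  have hf (v : V) : (f ^ n) v = a ^ n • v := by
    rw [← map_pow, Module.algebraMap_end_apply]
  refine ⟨_, _, hn, fun hker => ha' (IsNilpotent.isUnit_one_sub ⟨n, ?_⟩), fun hrange => ha ?_⟩
  · refine FaithfulSMul.eq_of_smul_eq_smul fun v : V => ?_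
    rw [← hf, LinearMap.ker_eq_top.1 hker, LinearMap.zero_apply, zero_smul]
  · have hinj : Function.Injective (f ^ n) :=
      IsNoetherian.injective_of_surjective_endomorphism _ (LinearMap.range_eq_top.1 hrange)
    exact (isUnit_pow_iff hn0).1 (isUnit_of_injective_smul (V := V) ((funext hf) ▸ hinj))

theorem natCard_le_mul_natCard_quotient_annihilator [Finite R] [FaithfulSMul R V]
    {N P : Submodule R V} (h : N ⊔ P = ⊤) :
    Nat.card R ≤ Nat.card (R ⧸ N.annihilator) * Nat.card (R ⧸ P.annihilator) := by
  have hker : N.annihilator ⊓ P.annihilator = ⊥ := by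
    rwa [← Submodule.annihilator_sup, h, Submodule.annihilator_top, Module.annihilator_eq_bot]
  have (I : Ideal R) : Finite (R ⧸ I) := .of_surjective _ Ideal.Quotient.mk_surjective
  rw [← Nat.card_prod]
  refine Nat.card_le_card_of_injective
    ((Ideal.Quotient.mk N.annihilator).prod (Ideal.Quotient.mk P.annihilator)) ?_
  refine (injective_iff_map_eq_zero _).2 fun r hr => ?_
  rw [RingHom.prod_apply, Prod.mk_eq_zero, Ideal.Quotient.eq_zero_iff_mem,
    Ideal.Quotient.eq_zero_iff_mem, ← Submodule.mem_inf, hker] at hr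
  exact hr

theorem faithfulSMul_quotientAnnihilator :
    letI := Module.quotientAnnihilator (R := R) (M := V)
    FaithfulSMul (R ⧸ Module.annihilator R V) V := by
  let := Module.quotientAnnihilator (R := R) (M := V)
  refine Module.annihilator_eq_bot.1 (eq_bot_iff.2 fun a ha => ?_)
  obtain ⟨r, rfl⟩ := Ideal.Quotient.mk_surjective a
  rw [Module.mem_annihilator] at ha
  exact Ideal.Quotient.eq_zero_iff_mem.2 (Module.mem_annihilator.2 ha)

end FaithfulModules

section FiniteLocalRings

variable {R : Type*} [CommRing R] [IsLocalRing R] [Finite R]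

open IsLocalRing

/-- The Teichmüller section: some iterate `π` of the Frobenius kills the maximal ideal and induces
the identity on the residue field, so it factors through the residue field. -/
theorem exists_residueField_section (p : ℕ) [Fact p.Prime] [CharP R p] :
    ∃ (σ : ResidueField R →+* R) (N : ℕ),
      (∀ x, σ (residue R x) = x ^ N) ∧ ∀ x, residue R (σ x) = x := by
  have : CharP (ResidueField R) p :=
    ((residue R).comp (ZMod.castHom dvd_rfl R)).charP_iff_charP p |>.1 inferInstance
  have : Finite (ResidueField R) := .of_surjective _ residue_surjective
  let := Fintype.ofFinite (ResidueField R)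
  obtain ⟨d, -, hd⟩ := FiniteField.card (ResidueField R) p
  obtain ⟨t, ht⟩ := IsArtinianRing.isNilpotent_jacobson_bot (R := R)
  rw [jacobson_eq_maximalIdeal _ bot_ne_top] at ht
  let π := iterateFrobenius R p (d * t)
  have hπ (x : R) : π x = x ^ (p ^ (d * t)) := iterateFrobenius_def ..
  have hker (x : R) (hx : x ∈ maximalIdeal R) : π x = 0 := by
    have htle : t ≤ p ^ (d * t) :=
      (Nat.le_mul_of_pos_left t d.pos).trans (Nat.lt_pow_self (Fact.out : p.Prime).one_lt).le
    rw [hπ]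
    refine pow_eq_zero_of_le htle ?_
    simpa [ht] using Ideal.pow_mem_pow hx t
  refine ⟨Ideal.Quotient.lift (maximalIdeal R) π hker, p ^ (d * t), hπ, fun x => ?_⟩
  obtain ⟨x, rfl⟩ := residue_surjective x
  calc residue R (π x) = residue R x ^ Fintype.card (ResidueField R) ^ t := by
        rw [hπ, map_pow, hd, pow_mul]
    _ = residue R x := FiniteField.pow_card_pow t _

theorem exists_forall_eq_zero_or_eq_pow (k : Type*) [Field k] [Finite k] :
    ∃ ζ : k, ∀ x, x = 0 ∨ ∃ m : ℕ, ζ ^ m = x := by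
  obtain ⟨ζ, hζ⟩ := IsCyclic.exists_monoid_generator (α := kˣ)
  refine ⟨ζ, fun x => or_iff_not_imp_left.2 fun hx => ?_⟩
  obtain ⟨m, hm⟩ := hζ (Units.mk0 x hx)
  exact ⟨m, by simpa using congrArg Units.val hm⟩

/-- Replace one generator `x i` by `θ + (x i - σ (x̄ i))`, where `σ` is the Teichmüller section and
`θ = σ ζ` for a generator `ζ` of the unit group of the residue field: a power of the new generator
is `θ`, and `θ` generates the image of `σ`, which contains `K` and `σ (x̄ i)`. -/
theorem exists_adjoin_zmod_range_eq_top (p : ℕ) [Fact p.Prime] {K ι : Type*} [Field K]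
    [Algebra (ZMod p) R] [Algebra K R] [Nonempty ι] {x : ι → R}
    (hx : Algebra.adjoin K (Set.range x) = ⊤) :
    ∃ y : ι → R, Algebra.adjoin (ZMod p) (Set.range y) = ⊤ := by
  classical
  have : CharP R p := charP_of_injective_algebraMap (algebraMap (ZMod p) R).injective p
  obtain ⟨σ, N, hσ, hσ'⟩ := exists_residueField_section (R := R) p
  have : Finite (ResidueField R) := .of_surjective _ residue_surjective
  obtain ⟨ζ, hζ⟩ := exists_forall_eq_zero_or_eq_pow (ResidueField R)
  let i₀ := Classical.arbitrary ι
  let y := Function.update x i₀ (σ ζ + (x i₀ - σ (residue R (x i₀))))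
  let T := Algebra.adjoin (ZMod p) (Set.range y)
  have hy (i : ι) : y i ∈ T := Algebra.subset_adjoin ⟨i, rfl⟩
  have hy₀ : y i₀ = σ ζ + (x i₀ - σ (residue R (x i₀))) := Function.update_self ..
  have hζT : σ ζ ∈ T := by
    have : y i₀ ^ N = σ ζ := by rw [← hσ, hy₀]; simp [hσ']
    exact this ▸ pow_mem (hy i₀) N
  have hσT (c : ResidueField R) : σ c ∈ T := by
    obtain rfl | ⟨m, rfl⟩ := hζ c
    · simp
    · simpa using pow_mem hζT m
  have hxT (i : ι) : x i ∈ T := by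
    obtain rfl | hi := eq_or_ne i i₀
    · have : x i₀ = y i₀ - σ ζ + σ (residue R (x i₀)) := by rw [hy₀]; ring
      exact this ▸ add_mem (sub_mem (hy _) hζT) (hσT _)
    · simpa [y, hi] using hy i
  have hKT (c : K) : algebraMap K R c ∈ T := by
    have : σ (residue R (algebraMap K R c)) = algebraMap K R c := by
      have h := hσ' (residue R (algebraMap K R c))
      rw [hσ, ← map_pow] at h ⊢
      rw [((residue R).comp (algebraMap K R)).injective h]
    exact this ▸ hσT _
  refine ⟨y, eq_top_iff.2 fun r _ => ?_⟩
  have hr : r ∈ Algebra.adjoin K (Set.range x) := hx ▸ Algebra.mem_top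
  induction hr using Algebra.adjoin_induction with
  | mem r hr => exact Set.forall_mem_range.2 hxT r hr
  | algebraMap c => exact hKT c
  | add r s _ _ hr hs => exact add_mem (hr trivial) (hs trivial)
  | mul r s _ _ hr hs => exact mul_mem (hr trivial) (hs trivial)

end FiniteLocalRings

section FiniteTypeOverInt

theorem isJacobsonRing_int : IsJacobsonRing ℤ := by
  refine isJacobsonRing_iff_prime_eq.2 fun P hP => ?_
  obtain rfl | hP0 := eq_or_ne P ⊥
  · refine eq_bot_iff.2 fun x hx => ?_
    have hunit := Int.isUnit_iff.1 (Ideal.mem_jacobson_bot.1 hx x)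
    have hsq : x * x = 0 := by have := mul_self_nonneg x; lia
    exact mul_self_eq_zero.1 hsq
  · have := hP.isMaximal hP0
    exact Ideal.jacobson_eq_self_of_isMaximal

theorem finite_of_finiteType_int (K : Type*) [Field K] [Algebra.FiniteType ℤ K] : Finite K := by
  have := isJacobsonRing_int
  have : Module.Finite ℤ K := finite_of_finite_type_of_isJacobsonRing ℤ K
  obtain ⟨p, _⟩ := CharP.exists K
  obtain hp | rfl := CharP.char_is_prime_or_zero K p
  · have : Fact p.Prime := ⟨hp⟩
    let := ZMod.algebra K p
    have : Module.Finite (ZMod p) K := .of_restrictScalars_finite ℤ (ZMod p) K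
    exact Module.finite_of_finite (ZMod p)
  · have := CharP.charP_to_charZero K
    exact absurd (isField_of_isIntegral_of_isField (algebraMap ℤ K).injective_int
      (Field.toIsField K)) Int.not_isField

theorem exists_isMaximal_finite_quotient (R : Type*) [CommRing R] [Nontrivial R]
    [Algebra.FiniteType ℤ R] : ∃ M : Ideal R, M.IsMaximal ∧ Finite (R ⧸ M) := by
  obtain ⟨M, hM⟩ := Ideal.exists_maximal R
  let := Ideal.Quotient.field M
  -- `finite_of_finiteType_int` is about this `ℤ`-algebra structure, not the one inherited from `R`.
  have : @Algebra.FiniteType ℤ (R ⧸ M) _ _ (Ring.toIntAlgebra _) :=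
    .of_surjective (Ideal.Quotient.mk M).toIntAlgHom Ideal.Quotient.mk_surjective
  exact ⟨M, hM, finite_of_finiteType_int _⟩

end FiniteTypeOverInt

section FiniteFields

open scoped IsMulCommutative

theorem GerstenhaberBound.finrank_le {ι k R V : Type*} [Field k] [CommRing R] [Algebra k R]
    [AddCommGroup V] [Module k V] [Module R V] [IsScalarTower k R V] [FaithfulSMul R V]
    [FiniteDimensional k V] (H : GerstenhaberBound ι k) {x : ι → R}
    (hx : Algebra.adjoin k (Set.range x) = ⊤) :
    Module.finrank k R ≤ Module.finrank k V := by
  let φ := (LinearMap.toMatrixAlgEquiv (Module.finBasis k V)).toAlgHom.comp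
    (Algebra.lsmul k k V : R →ₐ[k] _)
  have hφ : Function.Injective φ :=
    (LinearMap.toMatrixAlgEquiv (Module.finBasis k V)).injective.comp fun _ _ h =>
      FaithfulSMul.eq_of_smul_eq_smul fun v : V => LinearMap.congr_fun h v
  have hrange : φ.range = Algebra.adjoin k (Set.range (φ ∘ x)) := by
    rw [← Algebra.map_top, ← hx, AlgHom.map_adjoin, Set.range_comp]
  rw [(AlgEquiv.ofInjective φ hφ).toLinearEquiv.finrank_eq, hrange]
  exact H _ _ fun i j => (Commute.all (x i) (x j)).map φ

theorem exists_adjoin_range_quotient_eq_top {ι K R : Type*} [Field K] [CommRing R] [Algebra K R]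
    (hR : ∃ x : ι → R, Algebra.adjoin K (Set.range x) = ⊤) (I : Ideal R) :
    ∃ x : ι → R ⧸ I, Algebra.adjoin K (Set.range x) = ⊤ := by
  obtain ⟨x, hx⟩ := hR
  refine ⟨Ideal.Quotient.mkₐ K I ∘ x, ?_⟩
  rw [Set.range_comp, ← AlgHom.map_adjoin, hx, Algebra.map_top]
  exact (AlgHom.range_eq_top _).2 (Ideal.Quotient.mkₐ_surjective K I)

variable {ι : Type*} [Nonempty ι] {p : ℕ} [Fact p.Prime]

theorem GerstenhaberBound.natCard_le_of_isLocalRing (H : GerstenhaberBound ι (ZMod p))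
    {K R V : Type*} [Field K] [CharP K p] [CommRing R] [Algebra K R] [IsLocalRing R]
    [AddCommGroup V] [Module R V] [FaithfulSMul R V] [Finite V]
    (hR : ∃ x : ι → R, Algebra.adjoin K (Set.range x) = ⊤) :
    Nat.card R ≤ Nat.card V := by
  have : Finite R := finite_of_faithfulSMul R V
  have : CharP R p := charP_of_injective_algebraMap (algebraMap K R).injective p
  let := ZMod.algebra R p
  let : Module (ZMod p) V := Module.compHom V (algebraMap (ZMod p) R)
  have : IsScalarTower (ZMod p) R V := .of_algebraMap_smul fun _ _ => rfl
  obtain ⟨x, hx⟩ := hR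
  obtain ⟨y, hy⟩ := exists_adjoin_zmod_range_eq_top p hx
  rw [Module.natCard_eq_pow_finrank (K := ZMod p) (V := R),
    Module.natCard_eq_pow_finrank (K := ZMod p) (V := V)]
  exact Nat.pow_le_pow_right Nat.card_pos (H.finrank_le hy)

theorem GerstenhaberBound.natCard_le (H : GerstenhaberBound ι (ZMod p))
    {K : Type*} [Field K] [CharP K p] {R : Type*} [CommRing R] [Algebra K R]
    {V : Type*} [AddCommGroup V] [Module R V] [FaithfulSMul R V] [Finite V]
    (hR : ∃ x : ι → R, Algebra.adjoin K (Set.range x) = ⊤) :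
    Nat.card R ≤ Nat.card V := by
  induction hV : Nat.card V using Nat.strong_induction_on generalizing R V with | _ m ih
  subst hV
  have : Finite R := finite_of_faithfulSMul R V
  by_cases hlocal : IsLocalRing R
  · exact H.natCard_le_of_isLocalRing hR
  cases subsingleton_or_nontrivial R
  · rw [Nat.card_unique]
    exact Nat.card_pos
  have ih_submodule (N : Submodule R V) (hN : N ≠ ⊤) :
      Nat.card (R ⧸ N.annihilator) ≤ Nat.card N := by
    let := Module.quotientAnnihilator (R := R) (M := N)
    have := faithfulSMul_quotientAnnihilator (R := R) (V := N)
    obtain ⟨v, -, hv⟩ := SetLike.exists_of_lt hN.lt_top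
    have hcard : Nat.card N < Nat.card V := Finite.card_subtype_lt hv
    exact ih _ hcard (exists_adjoin_range_quotient_eq_top hR _) rfl
  obtain ⟨N, P, hNP, hN, hP⟩ := exists_isCompl_of_not_isLocalRing (V := V) hlocal
  calc Nat.card R
      ≤ Nat.card (R ⧸ N.annihilator) * Nat.card (R ⧸ P.annihilator) :=
        natCard_le_mul_natCard_quotient_annihilator hNP.sup_eq_top
    _ ≤ Nat.card N * Nat.card P := Nat.mul_le_mul (ih_submodule N hN) (ih_submodule P hP)
    _ = Nat.card V := by
      rw [← Nat.card_prod, Nat.card_congr (Submodule.prodEquivOfIsCompl N P hNP).toEquiv]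

theorem GerstenhaberBound.of_zmod (H : GerstenhaberBound ι (ZMod p)) (K : Type*) [Field K]
    [Finite K] [CharP K p] : GerstenhaberBound ι K := by
  intro n X hX
  have : IsMulCommutative (Algebra.adjoin K (Set.range X)) :=
    Algebra.isMulCommutative_adjoin K <| Set.forall_mem_range.2 fun i =>
      Set.forall_mem_range.2 fun j => hX i j
  have : FaithfulSMul (Algebra.adjoin K (Set.range X)) (Fin n → K) :=
    ⟨fun h => Subtype.ext (Matrix.ext_iff_smul.2 h)⟩
  have hgen : ∃ x : ι → Algebra.adjoin K (Set.range X), Algebra.adjoin K (Set.range x) = ⊤ := by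
    refine ⟨fun i => ⟨X i, Algebra.subset_adjoin ⟨i, rfl⟩⟩, ?_⟩
    rw [← Algebra.adjoin_adjoin_coe_preimage]
    congr 1
    ext
    simp [Subtype.ext_iff]
  have hcard := H.natCard_le (V := Fin n → K) hgen
  rw [Module.natCard_eq_pow_finrank (K := K) (V := Algebra.adjoin K (Set.range X)),
    Module.natCard_eq_pow_finrank (K := K) (V := Fin n → K), Module.finrank_fin_fun] at hcard
  exact (Nat.pow_le_pow_iff_right Finite.one_lt_card).1 hcard

end FiniteFields

section SpreadingOut

open Matrix

theorem exists_mul_eq_one_of_linearIndependent_row {m n F : Type*} [Finite m] [DecidableEq m]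
    [Fintype n] [Field F] {M : Matrix m n F} (hM : LinearIndependent F M.row) :
    ∃ D : Matrix n m F, M * D = 1 := by
  let := Fintype.ofFinite m
  refine mulVec_surjective_iff_exists_right_inverse.1 ?_
  rw [← coe_mulVecLin, ← LinearMap.range_eq_top]
  refine Submodule.eq_top_of_finrank_eq ?_
  rw [Module.finrank_pi]
  exact hM.rank_matrix

theorem linearIndependent_row_of_mul_eq_one {m n R : Type*} [Finite m] [DecidableEq m]
    [Fintype n] [CommRing R] {M : Matrix m n R} {D : Matrix n m R} (h : M * D = 1) :
    LinearIndependent R M.row := by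
  let := Fintype.ofFinite m
  refine vecMul_injective_iff.1 (Function.LeftInverse.injective (g := (· ᵥ* D)) fun v => ?_)
  simp only [vecMul_vecMul, h, vecMul_one]

theorem linearIndependent_vec_iff {κ m n R : Type*} [CommRing R] {v : κ → Matrix m n R} :
    LinearIndependent R (fun j => (v j).vec) ↔ LinearIndependent R v :=
  LinearMap.linearIndependent_iff (v := v)
    { toFun := vec, map_add' := vec_add, map_smul' := vec_smul }
    (LinearMap.ker_eq_bot.2 vec_bijective.injective)

theorem lift_mem_adjoin_range {ι R A : Type*} [CommSemiring R] [Semiring A] [Algebra R A]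
    (x : ι → A) (w : FreeMonoid ι) :
    FreeMonoid.lift x w ∈ Algebra.adjoin R (Set.range x) := by
  have hw : FreeMonoid.lift x w ∈ Submonoid.closure (Set.range x) :=
    FreeMonoid.mrange_lift x ▸ ⟨w, rfl⟩
  exact Submonoid.closure_le (S := (Algebra.adjoin R (Set.range x)).toSubmonoid).2
    Algebra.subset_adjoin hw

variable {ι κ n : Type*} [Fintype n] [DecidableEq n]

/-- The matrix whose `j`-th row lists the entries of the word `w j` evaluated at the matrices `X`.
Independence of the evaluated words becomes right invertibility of this matrix, a condition that is
preserved by all ring homomorphisms. -/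
def wordMatrix {R : Type*} [CommRing R] (X : ι → Matrix n n R) (w : κ → FreeMonoid ι) :
    Matrix κ (n × n) R :=
  .of fun j => (FreeMonoid.lift X (w j)).vec

theorem wordMatrix_map {R S : Type*} [CommRing R] [CommRing S] (f : R →+* S)
    (X : ι → Matrix n n R) (w : κ → FreeMonoid ι) :
    (wordMatrix X w).map f = wordMatrix (fun i => (X i).map f) w := by
  funext j
  exact congrArg vec (FreeMonoid.hom_map_lift f.mapMatrix.toMonoidHom X (w j))

theorem linearIndependent_row_wordMatrix_iff {R : Type*} [CommRing R] {X : ι → Matrix n n R}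
    {w : κ → FreeMonoid ι} :
    LinearIndependent R (wordMatrix X w).row ↔
      LinearIndependent R fun j => FreeMonoid.lift X (w j) :=
  linearIndependent_vec_iff

variable {F : Type*} [Field F] (X : ι → Matrix n n F)

theorem card_le_finrank_adjoin_of_wordMatrix_mul_eq_one [Fintype κ] [DecidableEq κ]
    {w : κ → FreeMonoid ι} {D : Matrix (n × n) κ F} (h : wordMatrix X w * D = 1) :
    Fintype.card κ ≤ Module.finrank F (Algebra.adjoin F (Set.range X)) := by
  have hli := linearIndependent_row_wordMatrix_iff.1 (linearIndependent_row_of_mul_eq_one h)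
  let v (j : κ) : Algebra.adjoin F (Set.range X) := ⟨_, lift_mem_adjoin_range X (w j)⟩
  exact (LinearIndependent.of_comp (Subalgebra.val _).toLinearMap
    (v := v) hli).fintype_card_le_finrank

theorem exists_wordMatrix_mul_eq_one {r : ℕ}
    (hr : Module.finrank F (Algebra.adjoin F (Set.range X)) = r) :
    ∃ (w : Fin r → FreeMonoid ι) (D : Matrix (n × n) (Fin r) F), wordMatrix X w * D = 1 := by
  have hspan : Subalgebra.toSubmodule (Algebra.adjoin F (Set.range X)) =
      Submodule.span F (Set.range (FreeMonoid.lift X)) := by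
    rw [Algebra.adjoin_eq_span, ← FreeMonoid.mrange_lift, MonoidHom.coe_mrange]
  rw [← Subalgebra.finrank_toSubmodule, hspan] at hr
  subst hr
  obtain ⟨v, hv, -, hli⟩ :=
    Submodule.exists_fun_fin_finrank_span_eq F (Set.range (FreeMonoid.lift X))
  choose w hw using hv
  obtain rfl : (fun j => FreeMonoid.lift X (w j)) = v := funext hw
  exact ⟨w, exists_mul_eq_one_of_linearIndependent_row
    (linearIndependent_row_wordMatrix_iff.2 hli)⟩

theorem GerstenhaberBound.of_finite_fields {ι : Type*} [Finite ι] {F : Type u} [Field F]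
    (H : ∀ (K : Type u) [Field K] [Finite K], GerstenhaberBound ι K) :
    GerstenhaberBound ι F := by
  intro n X hX
  obtain ⟨w, D, hD⟩ := exists_wordMatrix_mul_eq_one X rfl
  let s : Set F := Set.range (fun t : ι × Fin n × Fin n => X t.1 t.2.1 t.2.2) ∪
    Set.range (Function.uncurry D)
  let R := Algebra.adjoin ℤ s
  have : Algebra.FiniteType ℤ R :=
    .adjoin_of_finite ((Set.finite_range _).union (Set.finite_range _))
  let Y (i : ι) : Matrix (Fin n) (Fin n) R :=
    .of fun k l => ⟨X i k l, Algebra.subset_adjoin (.inl ⟨(i, k, l), rfl⟩)⟩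
  let E : Matrix (Fin n × Fin n) _ R :=
    .of fun k j => ⟨D k j, Algebra.subset_adjoin (.inr ⟨(k, j), rfl⟩)⟩
  have hY (i j : ι) : Commute (Y i) (Y j) :=
    (hX i j).of_map (f := (R.val : R →+* F).mapMatrix) (map_injective Subtype.val_injective)
  have hE : wordMatrix Y w * E = 1 := by
    refine map_injective (f := (R.val : R →+* F)) Subtype.val_injective ?_
    simp only [Matrix.map_mul, wordMatrix_map]
    exact hD.trans (Matrix.map_one _ (map_zero _) (map_one _)).symm
  obtain ⟨M, _, _⟩ := exists_isMaximal_finite_quotient R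
  let := Ideal.Quotient.field M
  let q := Ideal.Quotient.mk M
  have hqE : wordMatrix (fun i => (Y i).map q) w * E.map q = 1 := by
    rw [← wordMatrix_map, ← Matrix.map_mul, hE, Matrix.map_one _ q.map_zero q.map_one]
  have hcard := card_le_finrank_adjoin_of_wordMatrix_mul_eq_one _ hqE
  rw [Fintype.card_fin] at hcard
  exact hcard.trans (H (R ⧸ M) n _ fun i j => (hY i j).map q.mapMatrix)

end SpreadingOut

theorem gerstenhaber_reduction_to_prime_fields_general {ι : Type*} [Finite ι] [Nonempty ι]
    (H : ∀ p : ℕ, p.Prime → GerstenhaberBound ι (ZMod p)) (F : Type*) [Field F] :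
    GerstenhaberBound ι F := by
  refine .of_finite_fields fun K _ _ => ?_
  obtain ⟨p, _⟩ := CharP.exists K
  have hp : p.Prime := CharP.char_is_prime K p
  have : Fact p.Prime := ⟨hp⟩
  exact (H p hp).of_zmod K

/-- O'Meara's reduction of the Gerstenhaber Problem to the prime fields `ℤ/p`: if the
dimension bound for commuting triples holds over `ZMod p` for every prime `p`, then it
holds over every field. -/
theorem gerstenhaber_reduction_to_prime_fields
    (H : ∀ (p : ℕ), p.Prime → ∀ (n : ℕ) (A B C : Matrix (Fin n) (Fin n) (ZMod p)),
      A * B = B * A → A * C = C * A → B * C = C * B →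
      Module.finrank (ZMod p) ↥(Algebra.adjoin (ZMod p) {A, B, C}) ≤ n) :
    ∀ (F : Type) [Field F] (n : ℕ) (A B C : Matrix (Fin n) (Fin n) F),
      A * B = B * A → A * C = C * A → B * C = C * B →
      Module.finrank F ↥(Algebra.adjoin F {A, B, C}) ≤ n :=
  fun F _ => gerstenhaberBound_fin_three_iff.1 <| gerstenhaber_reduction_to_prime_fields_general
    (fun p hp => gerstenhaberBound_fin_three_iff.2 (H p hp)) F
end

section
/- Let F be an algebraically closed field and let n ≥ 1. In the polynomial ring R = MvPolynomial ((Fin n × Fin n) ⊕ (Fin n × Fin n)) F, let X and Y be the generic n×n matrices whose (i,j) entries are the variables indexed by the left and right summands respectively, and let I be the ideal of R generated by the n² entries of the matrix X*Y − Y*X. Then the radical of I is a prime ideal (equivalently, the zero locus of I in the prime spectrum of R is an irreducible closed set). -/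
/-!
By the Nullstellensatz the radical of the commutator ideal consists of the polynomials vanishing on
all commuting pairs over an algebraic closure. The pairs `(A, p(A))`, with `p` a polynomial of
bounded degree, are the image of an affine space and hence form an irreducible set, so it suffices
to show that a polynomial `f` vanishing on them vanishes on every commuting pair `(A, B)`.
Splitting `B` into primary cyclic blocks and translating the eigenvalues of the blocks apart gives
a matrix `R` that commutes with `B` and has a cyclic vector `v`. On the line of pairs
`((1 - t) R + t A, B)`, which all commute, `v` remains cyclic for the first matrix outside the zero
set of a nonzero polynomial in `t`, and a matrix commuting with a matrix that has a cyclic vector is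
a polynomial in it. Hence `f` vanishes for all but finitely many `t`, thus also at `t = 1`.
-/

section Generators

open Function Polynomial

variable {R : Type*} [CommRing R]

theorem aeval_quotientMk (J : Ideal R[X]) (r q : R[X]) :
    aeval (Ideal.Quotient.mk J r) q = Ideal.Quotient.mk J (q.comp r) := by
  rw [comp_eq_aeval]
  exact aeval_algHom_apply (Ideal.Quotient.mkₐ R J) r q

theorem surjective_aeval_quotientMk_X_add_C (J : Ideal R[X]) (c : R) :
    Surjective (aeval (R := R) (Ideal.Quotient.mk J (X + C c))) := by
  intro y
  obtain ⟨q, rfl⟩ := Ideal.Quotient.mk_surjective y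
  refine ⟨q.comp (X - C c), ?_⟩
  rw [aeval_quotientMk, Polynomial.comp_assoc]
  simp

theorem surjective_aeval_pi {ι : Type*} [Finite ι] {A : ι → Type*} [∀ i, Ring (A i)]
    [∀ i, Algebra R (A i)] {a : ∀ i, A i} {m : ι → R[X]} (hm : Pairwise (IsCoprime on m))
    (hma : ∀ i, aeval (a i) (m i) = 0) (ha : ∀ i, Surjective (aeval (R := R) (a i))) :
    Surjective (aeval (R := R) a) := by
  intro y
  choose q hq using fun i => ha i (y i)
  have hcoprime : Pairwise (IsCoprime on fun i => Ideal.span {m i}) := fun i j hij =>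
    (Ideal.isCoprime_span_singleton_iff _ _).2 (hm hij)
  obtain ⟨s, hs⟩ := Ideal.exists_forall_sub_mem_ideal hcoprime q
  refine ⟨s, funext fun i => ?_⟩
  obtain ⟨d, hd⟩ := Ideal.mem_span_singleton.1 (hs i)
  calc aeval a s i = aeval (a i) s := (aeval_algHom_apply (Pi.evalAlgHom R A i) a s).symm
    _ = aeval (a i) (m i * d + q i) := by rw [← hd, sub_add_cancel]
    _ = y i := by rw [map_add, map_mul, hma, zero_mul, zero_add, hq]

theorem exists_surjective_aeval_pi_quotient {F ι : Type*} [Field F] [IsAlgClosed F] [Finite ι]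
    {p : ι → F[X]} (hp : ∀ i, Irreducible (p i)) (e : ι → ℕ) :
    ∃ r : ∀ i, F[X] ⧸ Ideal.span {p i ^ e i}, Surjective (aeval (R := F) r) := by
  have hroot (i : ι) : ∃ a, p i ∣ X - C a := by
    obtain ⟨a, ha⟩ := IsAlgClosed.exists_root (p i) (hp i).degree_pos.ne'
    exact ⟨a, (irreducible_X_sub_C a).dvd_symm (hp i) (dvd_iff_isRoot.2 ha)⟩
  choose a ha using hroot
  obtain ⟨c⟩ : Nonempty (ι ↪ F) :=
    ⟨(Finite.equivFin ι).toEmbedding.trans (Fin.valEmbedding.trans (Infinite.natEmbedding F))⟩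
  -- Translating the eigenvalue `a i` to `c i` makes the minimal polynomials coprime.
  refine ⟨fun i => Ideal.Quotient.mk _ (X + C (c i - a i)),
    surjective_aeval_pi (m := fun i => (X - C (c i)) ^ e i)
      (fun i j hij => (pairwise_coprime_X_sub_C c.injective hij).pow) (fun i => ?_)
      fun i => surjective_aeval_quotientMk_X_add_C _ _⟩
  have hcomp : ((X - C (c i)) ^ e i).comp (X + C (c i - a i)) = (X - C (a i)) ^ e i := by
    simp only [pow_comp, sub_comp, X_comp, C_comp, C_sub]
    ring
  rw [aeval_quotientMk, hcomp, Ideal.Quotient.eq_zero_iff_mem, Ideal.mem_span_singleton]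
  exact pow_dvd_pow_of_dvd (ha i) _

end Generators

section CyclicVector

open Function Polynomial

variable {R V : Type*} [CommRing R] [AddCommGroup V] [Module R V]

/-- `v` is a cyclic vector of the endomorphism `g`: the vectors `q(g) v`, for `q` a polynomial,
exhaust the module. -/
def IsCyclicVector (g : Module.End R V) (v : V) : Prop :=
  Surjective fun q : R[X] => aeval g q v

theorem exists_commute_isCyclicVector_of_equiv {A : Type*} [CommRing A] [Algebra R A]
    [Algebra R[X] A] [IsScalarTower R R[X] A] {f : Module.End R V}
    (ψ : Module.AEval' f ≃ₗ[R[X]] A) {r : A} (hr : Surjective (aeval (R := R) r)) :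
    ∃ (g : Module.End R V) (v : V), Commute f g ∧ IsCyclicVector g v := by
  let e : A ≃ₗ[R] V := ((Module.AEval'.of f).trans (ψ.restrictScalars R)).symm
  have he (w : V) : e.symm (f w) = (X : R[X]) • e.symm w := by
    change ψ (Module.AEval'.of f (f w)) = X • ψ (Module.AEval'.of f w)
    rw [← map_smul, Module.AEval'.X_smul_of]
  let φ : A →ₐ[R] Module.End R V := (e.conjAlgEquiv R).toAlgHom.comp (Algebra.lmul R A)
  have hφ (a : A) (w : V) : φ a w = e (a * e.symm w) := rfl
  refine ⟨φ r, e 1, LinearMap.ext fun w => e.symm.injective ?_, fun w => ?_⟩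
  · simp only [Module.End.mul_apply, he, hφ, LinearEquiv.symm_apply_apply, mul_smul_comm]
  · obtain ⟨q, hq⟩ := hr (e.symm w)
    exact ⟨q, by simp [aeval_algHom_apply, hφ, hq]⟩

theorem exists_commute_isCyclicVector {F V : Type*} [Field F] [IsAlgClosed F] [AddCommGroup V]
    [Module F V] [FiniteDimensional F V] (f : Module.End F V) :
    ∃ (g : Module.End F V) (v : V), Commute f g ∧ IsCyclicVector g v := by
  classical
  obtain ⟨ι, _, p, hp, e, ⟨ψ⟩⟩ := Module.equiv_directSum_of_isTorsion
    (Module.AEval.isTorsion_of_finiteDimensional F V f)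
  obtain ⟨r, hr⟩ := exists_surjective_aeval_pi_quotient hp e
  exact exists_commute_isCyclicVector_of_equiv
    (ψ.trans (DirectSum.linearEquivFunOnFintype F[X] ι _)) hr

end CyclicVector

section Krylov

open Function Polynomial

variable {n R S : Type*} [Fintype n] [DecidableEq n] [CommRing R] [CommRing S]

/-- The combination `∑ cₖ Aᵏ` of the powers `k < card n` of an `n × n` matrix. The coefficients
are indexed by `n` itself, through an arbitrary enumeration. -/
noncomputable def powerCombination (A : Matrix n n R) (c : n → R) : Matrix n n R :=
  ∑ k, c k • A ^ (Fintype.equivFin n k : ℕ)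

/-- The Krylov matrix of `A` and `v`, with columns `Aᵏ v` for `k < card n`. The columns are
enumerated as in `powerCombination`, so that the matrix is square. -/
noncomputable def krylovMatrix (A : Matrix n n R) (v : n → R) : Matrix n n R :=
  Matrix.of fun i k => (A ^ (Fintype.equivFin n k : ℕ)).mulVec v i

theorem commute_powerCombination (A : Matrix n n R) (c : n → R) :
    Commute A (powerCombination A c) :=
  Commute.sum_right _ _ _ fun _ _ => ((Commute.refl A).pow_right _).smul_right _

theorem exists_powerCombination_eq_aeval (A : Matrix n n R) (q : R[X]) :
    ∃ c, powerCombination A c = aeval A q := by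
  nontriviality R
  have hdeg : (q %ₘ A.charpoly).degree < Fintype.card n :=
    A.charpoly_degree_eq_dim ▸ degree_modByMonic_lt q A.charpoly_monic
  refine ⟨fun k => (q %ₘ A.charpoly).coeff (Fintype.equivFin n k), ?_⟩
  rw [A.aeval_eq_aeval_mod_charpoly, aeval_def, eval₂_eq_sum, ← sum_fin _ (by simp) hdeg,
    powerCombination, ← (Fintype.equivFin n).sum_comp]
  simp only [Algebra.smul_def]

theorem matrix_map_pow {Φ : Type*} [FunLike Φ R S] [RingHomClass Φ R S] (φ : Φ)
    (A : Matrix n n R) (k : ℕ) : (A ^ k).map φ = A.map φ ^ k :=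
  map_pow (φ : R →+* S).mapMatrix A k

theorem map_powerCombination {Φ : Type*} [FunLike Φ R S] [RingHomClass Φ R S] (φ : Φ)
    (A : Matrix n n R) (c : n → R) :
    (powerCombination A c).map φ = powerCombination (A.map φ) (φ ∘ c) := by
  refine (map_sum (φ : R →+* S).mapMatrix _ _).trans (Finset.sum_congr rfl fun k _ => ?_)
  rw [comp_apply, ← matrix_map_pow]
  exact Matrix.map_smul' _ _ _ (map_mul φ)

theorem map_det_krylovMatrix {Φ : Type*} [FunLike Φ R S] [RingHomClass Φ R S] (φ : Φ)
    (A : Matrix n n R) (v : n → R) :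
    φ (krylovMatrix A v).det = (krylovMatrix (A.map φ) (φ ∘ v)).det := by
  refine ((φ : R →+* S).map_det _).trans (congrArg Matrix.det ?_)
  ext i k
  rw [krylovMatrix, krylovMatrix, Matrix.of_apply, ← matrix_map_pow]
  exact (φ : R →+* S).map_mulVec _ _ _

theorem krylovMatrix_mulVec (A : Matrix n n R) (v c : n → R) :
    (krylovMatrix A v).mulVec c = (powerCombination A c).mulVec v := by
  ext i
  simp only [powerCombination, Matrix.sum_mulVec, Matrix.smul_mulVec, Finset.sum_apply,
    Pi.smul_apply, smul_eq_mul]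
  exact Finset.sum_congr rfl fun k _ => mul_comm _ _

theorem mul_krylovMatrix_of_commute {A D : Matrix n n R} (h : Commute A D) (v : n → R) :
    D * krylovMatrix A v = krylovMatrix A (D.mulVec v) := by
  ext i k
  change D.mulVec ((A ^ (Fintype.equivFin n k : ℕ)).mulVec v) i =
    (A ^ (Fintype.equivFin n k : ℕ)).mulVec (D.mulVec v) i
  rw [Matrix.mulVec_mulVec, Matrix.mulVec_mulVec, (h.pow_left _).eq]

theorem isUnit_krylovMatrix {A : Matrix n n R} {v : n → R}
    (h : IsCyclicVector (Matrix.toLin' A) v) : IsUnit (krylovMatrix A v) := by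
  rw [← Matrix.mulVec_surjective_iff_isUnit]
  intro w
  obtain ⟨q, hq⟩ := h w
  obtain ⟨c, hc⟩ := exists_powerCombination_eq_aeval A q
  have haeval : aeval (Matrix.toLin' A) q = Matrix.toLin' (aeval A q) :=
    aeval_algHom_apply (Matrix.toLinAlgEquiv' (R := R) (n := n)).toAlgHom A q
  refine ⟨c, ?_⟩
  rw [krylovMatrix_mulVec, hc, ← Matrix.toLin'_apply, ← haeval]
  exact hq

theorem exists_eq_powerCombination_of_commute {A B : Matrix n n R} {v : n → R}
    (hv : IsUnit (krylovMatrix A v)) (h : Commute A B) : ∃ c, B = powerCombination A c := by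
  obtain ⟨c, hc⟩ := Matrix.mulVec_surjective_iff_isUnit.2 hv (B.mulVec v)
  refine ⟨c, hv.mul_right_cancel ?_⟩
  rw [mul_krylovMatrix_of_commute h, mul_krylovMatrix_of_commute (commute_powerCombination A c),
    ← krylovMatrix_mulVec, hc]

theorem exists_commute_isUnit_krylovMatrix {F : Type*} [Field F] [IsAlgClosed F]
    (B : Matrix n n F) : ∃ (A : Matrix n n F) (v : n → F),
      Commute A B ∧ IsUnit (krylovMatrix A v) := by
  obtain ⟨g, v, hcomm, hv⟩ := exists_commute_isCyclicVector (Matrix.toLin' B)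
  obtain ⟨A, rfl⟩ := Matrix.toLin'.surjective g
  refine ⟨A, v, Matrix.toLin'.injective ?_, isUnit_krylovMatrix hv⟩
  rw [Matrix.toLin'_mul, Matrix.toLin'_mul]
  exact hcomm.symm.eq

end Krylov

section Line

open Polynomial

variable {σ R S K : Type*} [CommRing R] [CommRing S] [CommRing K] [Algebra R K] [Algebra S K]

theorem exists_eval_eq_aeval_lineMap (f : MvPolynomial σ R) (x y : σ → K) :
    ∃ q : K[X], ∀ t, q.eval t = MvPolynomial.aeval (AffineMap.lineMap x y t) f := by
  refine ⟨MvPolynomial.aeval (fun s => C (x s) + X * C (y s - x s)) f, fun t => ?_⟩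
  have hline : AffineMap.lineMap x y t =
      fun s => Polynomial.aeval t (C (x s) + X * C (y s - x s)) := by
    ext s
    simp [AffineMap.lineMap_apply, add_comm]
  rw [hline, ← coe_aeval_eq_eval]
  exact MvPolynomial.comp_aeval_apply (f := fun s => C (x s) + X * C (y s - x s))
    ((aeval t).restrictScalars R) f

theorem aeval_eq_zero_of_lineMap [IsDomain K] [Infinite K] {f : MvPolynomial σ R}
    {d : MvPolynomial σ S} {x y : σ → K} (hd : MvPolynomial.aeval x d ≠ 0)
    (hf : ∀ t : K, MvPolynomial.aeval (AffineMap.lineMap x y t) d ≠ 0 →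
      MvPolynomial.aeval (AffineMap.lineMap x y t) f = 0) :
    MvPolynomial.aeval y f = 0 := by
  obtain ⟨p, hp⟩ := exists_eval_eq_aeval_lineMap f x y
  obtain ⟨q, hq⟩ := exists_eval_eq_aeval_lineMap d x y
  have hq_ne : q ≠ 0 := by
    rintro rfl
    exact hd (by simpa using (hq 0).symm)
  have hmul : q * p = 0 := Polynomial.funext fun t => by
    rw [eval_mul, eval_zero, mul_eq_zero, or_iff_not_imp_left, hp, hq]
    exact hf t
  have hp_zero : p = 0 := (mul_eq_zero.1 hmul).resolve_left hq_ne
  simpa [hp_zero] using (hp 1).symm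

end Line

section CommutingPairs

open Function

variable {n R S : Type*}

/-- A pair of matrices as a point of the affine space with coordinates indexed by
`(n × n) ⊕ (n × n)`. -/
def matrixPair (A B : Matrix n n R) : (n × n) ⊕ (n × n) → R :=
  Sum.elim (uncurry A) (uncurry B)

theorem comp_matrixPair (φ : R → S) (A B : Matrix n n R) :
    φ ∘ matrixPair A B = matrixPair (A.map φ) (B.map φ) := by
  ext (_ | _) <;> rfl

theorem exists_eq_matrixPair (x : (n × n) ⊕ (n × n) → R) : ∃ A B, x = matrixPair A B :=
  ⟨curry (x ∘ Sum.inl), curry (x ∘ Sum.inr), by ext (_ | _) <;> rfl⟩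

variable [CommRing R] [CommRing S]

/-- The ideal generated by the entries of the commutator of two matrices. -/
def commutatorIdeal [Fintype n] (A B : Matrix n n R) : Ideal R :=
  Ideal.span {p | ∃ i j, p = (A * B - B * A) i j}

theorem commutatorIdeal_le_ker_iff [Fintype n] {Φ : Type*} [FunLike Φ R S] [RingHomClass Φ R S]
    {φ : Φ} {A B : Matrix n n R} :
    commutatorIdeal A B ≤ RingHom.ker φ ↔ Commute (A.map φ) (B.map φ) := by
  have hentry (i j : n) :
      φ ((A * B - B * A) i j) = (A.map φ * B.map φ - B.map φ * A.map φ) i j := by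
    rw [← Matrix.map_mul, ← Matrix.map_mul]
    exact map_sub φ _ _
  rw [commutatorIdeal, Ideal.span_le, commute_iff_eq, ← sub_eq_zero, ← Matrix.ext_iff]
  constructor
  · intro h i j
    rw [← hentry]
    exact h ⟨i, j, rfl⟩
  · rintro h _ ⟨i, j, rfl⟩
    exact (hentry i j).trans (h i j)

variable (n R) in
/-- The generic matrix in the first block of variables. -/
noncomputable def genericFst : Matrix n n (MvPolynomial ((n × n) ⊕ (n × n)) R) :=
  Matrix.of fun i j => MvPolynomial.X (Sum.inl (i, j))

variable (n R) in
/-- The generic matrix in the second block of variables. -/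
noncomputable def genericSnd : Matrix n n (MvPolynomial ((n × n) ⊕ (n × n)) R) :=
  Matrix.of fun i j => MvPolynomial.X (Sum.inr (i, j))

theorem lineMap_matrixPair (A A' B : Matrix n n R) (t : R) :
    AffineMap.lineMap (matrixPair A B) (matrixPair A' B) t =
      matrixPair (AffineMap.lineMap A A' t) B := by
  ext (_ | _) <;> simp [matrixPair, AffineMap.lineMap_apply, uncurry]

variable [Algebra R S]

@[simp]
theorem genericFst_map_aeval (A B : Matrix n n S) :
    (genericFst n R).map (MvPolynomial.aeval (matrixPair A B)) = A := by
  ext i j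
  simp [genericFst, matrixPair, uncurry]

@[simp]
theorem genericSnd_map_aeval (A B : Matrix n n S) :
    (genericSnd n R).map (MvPolynomial.aeval (matrixPair A B)) = B := by
  ext i j
  simp [genericSnd, matrixPair, uncurry]

variable [Fintype n] [DecidableEq n]

variable (n R) in
/-- The comorphism of the map `(A, c) ↦ (A, ∑ cₖ Aᵏ)` from an affine space to pairs of commuting
matrices. -/
noncomputable def powerCombinationComorphism :
    MvPolynomial ((n × n) ⊕ (n × n)) R →ₐ[R] MvPolynomial ((n × n) ⊕ n) R :=
  let A : Matrix n n (MvPolynomial ((n × n) ⊕ n) R) :=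
    Matrix.of fun i j => MvPolynomial.X (Sum.inl (i, j))
  MvPolynomial.aeval (matrixPair A (powerCombination A (MvPolynomial.X ∘ Sum.inr)))

theorem aeval_powerCombinationComorphism (A : Matrix n n S) (c : n → S)
    (f : MvPolynomial ((n × n) ⊕ (n × n)) R) :
    MvPolynomial.aeval (Sum.elim (uncurry A) c) (powerCombinationComorphism n R f) =
      MvPolynomial.aeval (matrixPair A (powerCombination A c)) f := by
  let φ : MvPolynomial ((n × n) ⊕ n) R →ₐ[R] S := MvPolynomial.aeval (Sum.elim (uncurry A) c)
  have hA : (Matrix.of fun i j => MvPolynomial.X (Sum.inl (i, j))).map φ = A := by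
    ext
    simp [φ, uncurry]
  have hc : φ ∘ MvPolynomial.X ∘ Sum.inr = c := by
    ext
    simp [φ]
  rw [powerCombinationComorphism, MvPolynomial.comp_aeval_apply, ← comp_def, comp_matrixPair,
    map_powerCombination, hA, hc]

theorem aeval_matrixPair_eq_zero_of_commute {K : Type*} [Field K] [IsAlgClosed K] [Algebra R K]
    {f : MvPolynomial ((n × n) ⊕ (n × n)) R}
    (hf : ∀ (A : Matrix n n K) (c : n → K),
      MvPolynomial.aeval (matrixPair A (powerCombination A c)) f = 0)
    {A B : Matrix n n K} (h : Commute A B) : MvPolynomial.aeval (matrixPair A B) f = 0 := by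
  obtain ⟨A₀, v, h₀, hv⟩ := exists_commute_isUnit_krylovMatrix B
  let d : MvPolynomial ((n × n) ⊕ (n × n)) K :=
    (krylovMatrix (genericFst n K) (MvPolynomial.C ∘ v)).det
  have hd (A' : Matrix n n K) :
      MvPolynomial.aeval (matrixPair A' B) d = (krylovMatrix A' v).det := by
    rw [map_det_krylovMatrix, genericFst_map_aeval]
    congr 2
    ext
    simp
  refine aeval_eq_zero_of_lineMap (d := d) (x := matrixPair A₀ B) ?_ fun t ht => ?_
  · rw [hd]
    exact ((Matrix.isUnit_iff_isUnit_det _).1 hv).ne_zero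
  · rw [lineMap_matrixPair] at ht ⊢
    rw [hd, ← isUnit_iff_ne_zero, ← Matrix.isUnit_iff_isUnit_det] at ht
    have hcomm : Commute (AffineMap.lineMap A₀ A t) B := by
      rw [AffineMap.lineMap_apply_module]
      exact (h₀.smul_left _).add_left (h.smul_left _)
    obtain ⟨c, hc⟩ := exists_eq_powerCombination_of_commute ht hcomm
    rw [hc]
    exact hf _ c

theorem radical_commutatorIdeal_generic_eq_ker {F : Type*} [Field F] :
    (commutatorIdeal (genericFst n F) (genericSnd n F)).radical =
      RingHom.ker (powerCombinationComorphism n F) := by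
  apply le_antisymm
  · refine (RingHom.ker_isPrime _).radical_le_iff.2 ?_
    rw [commutatorIdeal_le_ker_iff, powerCombinationComorphism, genericFst_map_aeval,
      genericSnd_map_aeval]
    exact commute_powerCombination _ _
  · intro f hf
    rw [← MvPolynomial.vanishingIdeal_zeroLocus_eq_radical (K := AlgebraicClosure F),
      MvPolynomial.mem_vanishingIdeal_iff]
    intro x hx
    obtain ⟨A, B, rfl⟩ := exists_eq_matrixPair x
    refine aeval_matrixPair_eq_zero_of_commute (fun A c => ?_) ?_
    · rw [← aeval_powerCombinationComorphism, RingHom.mem_ker.1 hf, map_zero]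
    · simpa only [genericFst_map_aeval, genericSnd_map_aeval] using
        commutatorIdeal_le_ker_iff (φ := MvPolynomial.aeval (R := F) (matrixPair A B)).1 hx

end CommutingPairs

theorem commuting_pairs_variety_irreducible_general {n F : Type*} [Fintype n] [Field F] :
    (commutatorIdeal (genericFst n F) (genericSnd n F)).radical.IsPrime := by
  classical
  rw [radical_commutatorIdeal_generic_eq_ker]
  exact RingHom.ker_isPrime _

/-- Motzkin–Taussky: the variety `C(2,n)` of commuting pairs of `n × n` matrices over an
algebraically closed field is irreducible; equivalently, the radical of the ideal
generated by the entries of the commutator of two generic matrices is prime. -/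
theorem commuting_pairs_variety_irreducible (F : Type*) [Field F] [IsAlgClosed F]
    (n : ℕ) (hn : 1 ≤ n)
    (X Y : Matrix (Fin n) (Fin n) (MvPolynomial ((Fin n × Fin n) ⊕ (Fin n × Fin n)) F))
    (hX : ∀ i j, X i j = MvPolynomial.X (Sum.inl (i, j)))
    (hY : ∀ i j, Y i j = MvPolynomial.X (Sum.inr (i, j)))
    (I : Ideal (MvPolynomial ((Fin n × Fin n) ⊕ (Fin n × Fin n)) F))
    (hI : I = Ideal.span {p | ∃ i j, p = (X * Y - Y * X) i j}) :
    I.radical.IsPrime := by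
  rw [hI, Matrix.ext hX (N := genericFst (Fin n) F), Matrix.ext hY (N := genericSnd (Fin n) F)]
  exact commuting_pairs_variety_irreducible_general
end

section
/- Let F be a field, let r, d ≥ 1, let J be the r×r matrix over F with J i j = 1 if j = i + 1 and J i j = 0 otherwise (the basic nilpotent Jordan matrix), and let W = J ⊗ I_d be the Kronecker product of J with the d×d identity matrix (the nilpotent Weyr matrix of homogeneous Weyr structure (d, d, …, d) with r parts). Then an (rd)×(rd) matrix K over F satisfies K * W = W * K if and only if there exist d×d matrices C₀, C₁, …, C_{r−1} over F such that K = Σ_{m=0}^{r−1} (J^m) ⊗ C_m. -/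
open Kronecker

/-!
Grouping the entries of `K` into `d × d` blocks turns `W` into the `r × r` shift matrix over the
noncommutative ring of `d × d` matrices, so only the centralizer of a shift `J` over an arbitrary
semiring is needed. Row `i` of a matrix `M` is the first row of `J ^ i * M`, hence a matrix `M` that
commutes with `J` is determined by its first row: `M i j = (J ^ i * M) 0 j = (M * J ^ i) 0 j`.
-/

/-- The square matrix of size `r` whose `m`-th superdiagonal is constantly `a` and whose other
entries vanish. It encodes `a * J ^ m` for the nilpotent Jordan matrix `J = superdiagonal r 1 1`,
with coefficients that need not commute, so that `a` may itself be a matrix block. -/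
def superdiagonal {A : Type*} [Zero A] (r m : ℕ) (a : A) : Matrix (Fin r) (Fin r) A :=
  .of fun i j => if (j : ℕ) = i + m then a else 0

theorem superdiagonal_apply {A : Type*} [Zero A] {r : ℕ} (m : ℕ) (a : A) (i j : Fin r) :
    superdiagonal r m a i j = if (j : ℕ) = i + m then a else 0 :=
  rfl

theorem superdiagonal_mul_apply {A ι : Type*} [NonUnitalNonAssocSemiring A] {r : ℕ} (m : ℕ) (a : A)
    (M : Matrix (Fin r) ι A) (i : Fin r) (j : ι) :
    (superdiagonal r m a * M) i j = if h : i + m < r then a * M ⟨i + m, h⟩ j else 0 := by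
  simp only [Matrix.mul_apply, superdiagonal_apply, ite_mul, zero_mul]
  split_ifs with h
  · simp [← Fin.ext_iff (b := ⟨i + m, h⟩)]
  · exact Finset.sum_eq_zero fun k _ => if_neg (by omega)

theorem superdiagonal_mul_superdiagonal {A : Type*} [NonUnitalNonAssocSemiring A] (r m k : ℕ)
    (a b : A) : superdiagonal r m a * superdiagonal r k b = superdiagonal r (m + k) (a * b) := by
  ext i j
  rw [superdiagonal_mul_apply]
  simp only [superdiagonal_apply, mul_ite, mul_zero, add_assoc]
  split_ifs <;> first | rfl | omega

theorem superdiagonal_zero_one {A : Type*} [Zero A] [One A] (r : ℕ) :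
    superdiagonal r 0 (1 : A) = 1 := by
  ext i j
  simp [superdiagonal_apply, Matrix.one_apply, Fin.ext_iff, eq_comm]

theorem commute_superdiagonal_superdiagonal_one {A : Type*} [NonAssocSemiring A] (r m k : ℕ)
    (a : A) : Commute (superdiagonal r m a) (superdiagonal r k 1) := by
  rw [commute_iff_eq, superdiagonal_mul_superdiagonal, superdiagonal_mul_superdiagonal, mul_one,
    one_mul, add_comm]

theorem superdiagonal_one_one_pow {A : Type*} [Semiring A] (r m : ℕ) :
    superdiagonal r 1 (1 : A) ^ m = superdiagonal r m 1 := by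
  induction m with
  | zero => rw [pow_zero, superdiagonal_zero_one]
  | succ m ih => rw [pow_succ, ih, superdiagonal_mul_superdiagonal, mul_one]

section Semiring

variable {A : Type*} [Semiring A] {r : ℕ}

theorem eq_sum_superdiagonal_of_commute {M : Matrix (Fin r) (Fin r) A}
    (hM : Commute M (superdiagonal r 1 1)) :
    M = ∑ m : Fin r, superdiagonal r m (M ⟨0, m.pos⟩ m) := by
  ext i j
  have hMi : superdiagonal r i 1 * M = M * superdiagonal r i 1 := by
    simpa only [superdiagonal_one_one_pow] using (hM.pow_right i).eq.symm
  calc M i j = (superdiagonal r i (1 : A) * M) ⟨0, i.pos⟩ j := by simp [superdiagonal_mul_apply]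
    _ = (M * superdiagonal r i (1 : A)) ⟨0, i.pos⟩ j := by rw [hMi]
    _ = (∑ m : Fin r, superdiagonal r m (M ⟨0, m.pos⟩ m)) i j := by
      simp only [Matrix.mul_apply, Matrix.sum_apply, superdiagonal_apply, mul_ite, mul_one,
        mul_zero, add_comm]

theorem commute_superdiagonal_one_one_iff {M : Matrix (Fin r) (Fin r) A} :
    Commute M (superdiagonal r 1 1) ↔
      ∃ c : Fin r → A, M = ∑ m : Fin r, superdiagonal r m (c m) := by
  refine ⟨fun hM => ⟨_, eq_sum_superdiagonal_of_commute hM⟩, ?_⟩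
  rintro ⟨c, rfl⟩
  exact Commute.sum_left _ _ _ fun m _ => commute_superdiagonal_superdiagonal_one r m 1 (c m)

end Semiring

theorem superdiagonal_one_kronecker {R n p : Type*} [MulZeroOneClass R] (r m : ℕ)
    (C : Matrix n p R) :
    superdiagonal r m (1 : R) ⊗ₖ C = Matrix.comp _ _ _ _ _ (superdiagonal r m C) := by
  ext ⟨i, a⟩ ⟨j, b⟩
  simp [superdiagonal_apply, Matrix.ite_apply]

theorem centralizer_of_homogeneous_weyr_matrix_general {R n : Type*} [Semiring R] [Fintype n]
    [DecidableEq n] {r : ℕ} (J : Matrix (Fin r) (Fin r) R)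
    (hJ : ∀ i j : Fin r, J i j = if (j : ℕ) = (i : ℕ) + 1 then 1 else 0)
    (W : Matrix (Fin r × n) (Fin r × n) R) (hW : W = J ⊗ₖ (1 : Matrix n n R))
    (K : Matrix (Fin r × n) (Fin r × n) R) :
    K * W = W * K ↔
      ∃ C : Fin r → Matrix n n R, K = ∑ m : Fin r, (J ^ (m : ℕ)) ⊗ₖ C m := by
  obtain rfl : J = superdiagonal r 1 1 := Matrix.ext hJ
  let blocks := Matrix.compRingEquiv (Fin r) n R
  obtain ⟨M, rfl⟩ := blocks.surjective K
  have kronecker_eq (m : ℕ) (C : Matrix n n R) :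
      (superdiagonal r 1 (1 : R) ^ m) ⊗ₖ C = blocks (superdiagonal r m C) := by
    rw [superdiagonal_one_one_pow]
    exact superdiagonal_one_kronecker r m C
  have hW_blocks : W = blocks (superdiagonal r 1 1) := by rw [hW, ← kronecker_eq, pow_one]
  simp only [hW_blocks, kronecker_eq, ← map_mul, ← map_sum, blocks.injective.eq_iff]
  exact commute_superdiagonal_one_one_iff

/-- Belitskii's description of the centralizer of a nilpotent Weyr matrix with homogeneous
Weyr structure `(d, d, …, d)` (`r` parts): a matrix `K` commutes with `W = J ⊗ I_d`
(where `J` is the basic `r × r` nilpotent Jordan matrix) if and only if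
`K = Σ_{m=0}^{r-1} J^m ⊗ C_m` for some `d × d` matrices `C₀, …, C_{r-1}`. -/
theorem centralizer_of_homogeneous_weyr_matrix (F : Type*) [Field F]
    (r d : ℕ) (hr : 1 ≤ r) (hd : 1 ≤ d)
    (J : Matrix (Fin r) (Fin r) F)
    (hJ : ∀ i j : Fin r, J i j = if (j : ℕ) = (i : ℕ) + 1 then 1 else 0)
    (W : Matrix (Fin r × Fin d) (Fin r × Fin d) F)
    (hW : W = J ⊗ₖ (1 : Matrix (Fin d) (Fin d) F))
    (K : Matrix (Fin r × Fin d) (Fin r × Fin d) F) :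
    K * W = W * K ↔
      ∃ C : Fin r → Matrix (Fin d) (Fin d) F,
        K = ∑ m : Fin r, (J ^ (m : ℕ)) ⊗ₖ C m :=
  centralizer_of_homogeneous_weyr_matrix_general J hJ W hW K
end
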